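/- arXiv:2103.08240 — 2 statements merged into one kernel-verified Lean document; each statement's English description precedes it below -/
import Mathlib

section
/- Let ψ be a Cartan–Hadamard model function with ∫₀^∞ Θ(s)^{1/(p−1)} ds = +∞ and such that either (a) there exist γ ∈ [0,1) and ℓ ∈ (0,∞) with lim_{r→∞} r^γ·ψ′(r)/ψ(r) = ℓ, or (b) lim_{r→∞} ψ′(r)/ψ(r) = +∞ and lim_{r→∞} (ψ(r)/ψ′(r))·(d/dr) log(ψ′(r)/ψ(r)) = 0. Let u be a global radial solution. Then lim_{r→∞} (u′(r)/u(r))·(ψ(r)/ψ′(r)) = 0. -/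
open Real Filter MeasureTheory
open scoped ENNReal Topology

/-- The volume-to-surface ratio `Θ(r) = (∫₀ʳ ψ(s)^{n-1} ds) / ψ(r)^{n-1}`. -/
noncomputable def Theta (n : ℕ) (ψ : ℝ → ℝ) (r : ℝ) : ℝ :=
  (∫ s in (0:ℝ)..r, ψ s ^ (n - 1)) / ψ r ^ (n - 1)

/-- A Cartan–Hadamard model function: smooth, `ψ(0)=0`, `ψ'(0)=1`, convex on `[0,∞)`,
positive on `(0,∞)`. -/
def IsCHModel (ψ : ℝ → ℝ) : Prop :=
  ContDiff ℝ (⊤ : ℕ∞) ψ ∧ ψ 0 = 0 ∧ deriv ψ 0 = 1 ∧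
    (∀ r : ℝ, 0 ≤ r → 0 ≤ deriv (deriv ψ) r) ∧ (∀ r : ℝ, 0 < r → 0 < ψ r)

/-- A radial solution on `[0,T)` (with `T ∈ (0,∞]`) with initial datum `α`:
`u ∈ C¹([0,T))`, `u(0)=α`, `u'(0)=0`, `u>0` on `[0,T)`, and
`(ψ^{n-1} |u'|^{p-2} u')' = -ψ^{n-1} u^q` on `(0,T)`. -/
structure IsRadialSolution (n : ℕ) (p q : ℝ) (ψ : ℝ → ℝ) (T : ℝ≥0∞) (α : ℝ)
    (u : ℝ → ℝ) : Prop where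
  init : u 0 = α
  deriv_init : deriv u 0 = 0
  pos : ∀ r : ℝ, 0 ≤ r → ENNReal.ofReal r < T → 0 < u r
  diff : ∀ r : ℝ, 0 ≤ r → ENNReal.ofReal r < T → DifferentiableAt ℝ u r
  deriv_cont : ContinuousOn (deriv u) {r : ℝ | 0 ≤ r ∧ ENNReal.ofReal r < T}
  eqn : ∀ r : ℝ, 0 < r → ENNReal.ofReal r < T →
    HasDerivAt (fun s => ψ s ^ (n - 1) * |deriv u s| ^ (p - 2) * deriv u s)
      (-(ψ r ^ (n - 1) * u r ^ q)) r

/-- The energy function `F_u(r) = ((p-1)/p)|u'(r)|^p + u(r)^{q+1}/(q+1)`. -/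
noncomputable def energyF (p q : ℝ) (u : ℝ → ℝ) (r : ℝ) : ℝ :=
  (p - 1) / p * |deriv u r| ^ p + u r ^ (q + 1) / (q + 1)

/-- The Pohozaev function
`P_u(r) = (∫₀ʳ ψ^{n-1}) F_u(r) + (ψ(r)^{n-1}/(q+1)) |u'(r)|^{p-2} u'(r) u(r)`. -/
noncomputable def pohozaevP (n : ℕ) (p q : ℝ) (ψ u : ℝ → ℝ) (r : ℝ) : ℝ :=
  (∫ s in (0:ℝ)..r, ψ s ^ (n - 1)) * energyF p q u r +
    ψ r ^ (n - 1) / (q + 1) * (|deriv u r| ^ (p - 2) * deriv u r * u r)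

/-- `K(r) = ((p-1)/p + 1/(q+1)) ψ(r)^{n-1} - (n-1)(ψ'(r)/ψ(r)) ∫₀ʳ ψ^{n-1}`. -/
noncomputable def Kfun (n : ℕ) (p q : ℝ) (ψ : ℝ → ℝ) (r : ℝ) : ℝ :=
  ((p - 1) / p + 1 / (q + 1)) * ψ r ^ (n - 1) -
    ((n : ℝ) - 1) * (deriv ψ r / ψ r) * ∫ s in (0:ℝ)..r, ψ s ^ (n - 1)

/-- Condition (a): `r^γ ψ'(r)/ψ(r) → ℓ ∈ (0,∞)` for some `γ ∈ [0,1)`. -/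
def CondA (ψ : ℝ → ℝ) : Prop :=
  ∃ γ ℓ : ℝ, 0 ≤ γ ∧ γ < 1 ∧ 0 < ℓ ∧
    Tendsto (fun r : ℝ => r ^ γ * deriv ψ r / ψ r) atTop (nhds ℓ)

/-- Condition (b): `ψ'/ψ → +∞` and `(ψ/ψ') (log(ψ'/ψ))' → 0`. -/
def CondB (ψ : ℝ → ℝ) : Prop :=
  Tendsto (fun r : ℝ => deriv ψ r / ψ r) atTop atTop ∧
    Tendsto (fun r : ℝ => ψ r / deriv ψ r *
      deriv (fun s : ℝ => Real.log (deriv ψ s / ψ s)) r) atTop (nhds 0)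

/-- A function with nonpositive derivative on a half-line lies below its initial value. -/
lemma le_of_hasDerivAt_nonpos {f f' : ℝ → ℝ} {R : ℝ} (hc : ContinuousOn f (Set.Ici R))
    (hd : ∀ r, R < r → HasDerivAt f (f' r) r) (hn : ∀ r, R < r → f' r ≤ 0) {r : ℝ} (hr : R ≤ r) :
    f r ≤ f R := by
  have h : AntitoneOn f (Set.Ici R) := by
    refine antitoneOn_of_deriv_nonpos (convex_Ici R) hc ?_ ?_
    · intro x hx
      rw [interior_Ici] at hx
      exact (hd x hx).differentiableAt.differentiableWithinAt
    · intro x hx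
      rw [interior_Ici] at hx
      rw [(hd x hx).deriv]
      exact hn x hx
  exact h Set.self_mem_Ici hr hr

/-- The basic properties of a model function `ψ` together with a primitive `M` of `ψ ^ N`. -/
structure ModelData (N : ℕ) (ψ M : ℝ → ℝ) : Prop where
  smooth : ContDiff ℝ (⊤ : ℕ∞) ψ
  zero : ψ 0 = 0
  one_le_deriv : ∀ r, 0 ≤ r → 1 ≤ deriv ψ r
  id_le : ∀ r, 0 ≤ r → r ≤ ψ r
  deriv2_nonneg : ∀ r, 0 ≤ r → 0 ≤ deriv (deriv ψ) r
  vol_zero : M 0 = 0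
  vol_deriv : ∀ r, HasDerivAt M (ψ r ^ N) r

/-- The data of a positive radial solution `u` with `a = -u'` positive. -/
structure DecreasingSolution (N : ℕ) (p q : ℝ) (ψ u a : ℝ → ℝ) : Prop where
  pos : ∀ r, 0 ≤ r → 0 < u r
  slope_zero : a 0 = 0
  slope_cont : ContinuousOn a (Set.Ici 0)
  slope_pos : ∀ r, 0 < r → 0 < a r
  hasDerivAt : ∀ r, 0 ≤ r → HasDerivAt u (-a r) r
  flux : ∀ r, 0 < r → HasDerivAt (fun s => ψ s ^ N * a s ^ (p - 1)) (ψ r ^ N * u r ^ q) r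

lemma IsCHModel.modelData {ψ : ℝ → ℝ} (hψ : IsCHModel ψ) (N : ℕ) :
    ModelData N ψ (fun r => ∫ s in (0:ℝ)..r, ψ s ^ N) := by
  obtain ⟨hs, h0, h1, h2, -⟩ := hψ
  have hd : Differentiable ℝ ψ := hs.differentiable (by simp)
  have hs' : ContDiff ℝ (⊤ : ℕ∞) (deriv ψ) := (contDiff_infty_iff_deriv.1 hs).2
  have hd' : Differentiable ℝ (deriv ψ) := hs'.differentiable (by simp)
  have hone : ∀ r, 0 ≤ r → 1 ≤ deriv ψ r := fun r hr => by
    have := le_of_hasDerivAt_nonpos (f := fun r => - deriv ψ r) hd'.continuous.neg.continuousOn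
      (fun r _ => (hd' r).hasDerivAt.neg) (fun r hr => by simpa using h2 r hr.le) hr
    simp only [h1] at this
    linarith
  refine ⟨hs, h0, hone, fun r hr => ?_, h2, by simp, fun r => ?_⟩
  · have := le_of_hasDerivAt_nonpos (f := fun r => r - ψ r)
      (continuous_id.sub hd.continuous).continuousOn
      (fun r _ => (hasDerivAt_id r).sub (hd r).hasDerivAt)
      (fun r hr => by have := hone r hr.le; linarith) hr
    simp only [h0] at this
    linarith
  · have hc : Continuous fun s => ψ s ^ N := hd.continuous.pow N
    exact intervalIntegral.integral_hasDerivAt_right (hc.intervalIntegrable _ _)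
      (hc.stronglyMeasurableAtFilter _ _) hc.continuousAt

namespace ModelData

variable {N : ℕ} {ψ M : ℝ → ℝ}

lemma hasDerivAt (h : ModelData N ψ M) (r : ℝ) : HasDerivAt ψ (deriv ψ r) r :=
  (h.smooth.differentiable (by simp) r).hasDerivAt

lemma hasDerivAt_deriv (h : ModelData N ψ M) (r : ℝ) :
    HasDerivAt (deriv ψ) (deriv (deriv ψ) r) r :=
  ((contDiff_infty_iff_deriv.1 h.smooth).2.differentiable (by simp) r).hasDerivAt

lemma pos (h : ModelData N ψ M) {r : ℝ} (hr : 0 < r) : 0 < ψ r := hr.trans_le (h.id_le r hr.le)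

lemma deriv_pos (h : ModelData N ψ M) {r : ℝ} (hr : 0 ≤ r) : 0 < deriv ψ r :=
  one_pos.trans_le (h.one_le_deriv r hr)

lemma tendsto_atTop (h : ModelData N ψ M) : Tendsto ψ atTop atTop :=
  tendsto_atTop_mono' _ ((eventually_ge_atTop 0).mono h.id_le) tendsto_id

lemma vol_nonneg (h : ModelData N ψ M) {r : ℝ} (hr : 0 ≤ r) : 0 ≤ M r := by
  have := le_of_hasDerivAt_nonpos (R := 0) (f := fun r => - M r)
    (fun x _ => (h.vol_deriv x).neg.continuousAt.continuousWithinAt)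
    (fun r _ => (h.vol_deriv r).neg) (fun r hr => by have := pow_pos (h.pos hr) N; linarith) hr
  simp only [h.vol_zero] at this
  linarith

lemma vol_tendsto (h : ModelData N ψ M) : Tendsto M atTop atTop := by
  have key : ∀ r, 1 ≤ r → r - 1 ≤ M r := fun r hr => by
    have := le_of_hasDerivAt_nonpos (R := 1) (f := fun r => r - M r)
      (fun x _ => ((hasDerivAt_id x).sub (h.vol_deriv x)).continuousAt.continuousWithinAt)
      (fun r _ => (hasDerivAt_id r).sub (h.vol_deriv r))
      (fun r hr => by
        have : 1 ≤ ψ r ^ N := one_le_pow₀ (hr.le.trans (h.id_le r (by linarith)))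
        linarith) hr
    have h1 := h.vol_nonneg (r := 1) zero_le_one
    linarith
  exact tendsto_atTop_mono' _ ((eventually_ge_atTop 1).mono key)
    (tendsto_atTop_add_const_right _ _ tendsto_id)

/-- Convexity of `ψ` bounds `ψ ^ (N + 1)` by its derivative at the endpoint. -/
lemma pow_succ_le (h : ModelData N ψ M) {r : ℝ} (hr : 0 ≤ r) :
    ψ r ^ (N + 1) ≤ (N + 1) * deriv ψ r * M r := by
  have hd : ∀ r, HasDerivAt (fun r => ψ r ^ (N + 1) - (N + 1) * deriv ψ r * M r)
      (-((N + 1) * deriv (deriv ψ) r * M r)) r := fun r => by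
    refine (((h.hasDerivAt r).pow (N + 1)).sub
      (((h.hasDerivAt_deriv r).const_mul ((N : ℝ) + 1)).mul (h.vol_deriv r))).congr_deriv ?_
    push_cast
    ring
  have := le_of_hasDerivAt_nonpos (R := 0) (fun x _ => (hd x).continuousAt.continuousWithinAt)
    (fun r _ => hd r) (fun r hr => by
      have := h.deriv2_nonneg r hr.le
      have := h.vol_nonneg hr.le
      have : 0 ≤ ((N : ℝ) + 1) * deriv (deriv ψ) r * M r := by positivity
      linarith) hr
  simp only [h.zero, h.vol_zero] at this
  simp at this
  linarith

/-- The logarithmic derivative `ψ' / ψ` controls surface over volume up to a factor close to `1`,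
when it is asymptotic to a slowly varying function `g`. -/
lemma eventually_surface_le (h : ModelData N ψ M) (hN : 1 ≤ N) {g η : ℝ → ℝ} {k : ℝ}
    (hg : ∀ᶠ r in atTop, 0 < g r ∧ HasDerivAt g (η r * (deriv ψ r / ψ r) * g r) r)
    (hη : Tendsto η atTop (𝓝 0))
    (hhg : Tendsto (fun r => deriv ψ r / ψ r / g r) atTop (𝓝 1)) (hk0 : 0 < k) (hk : k < 1) :
    ∀ᶠ r in atTop, k * ψ r ^ N ≤ N * (deriv ψ r / ψ r) * M r := by
  have hN' : (1 : ℝ) ≤ N := by exact_mod_cast hN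
  obtain ⟨k₁, hk₁, hk₁'⟩ := exists_between hk
  obtain ⟨k₂, hk₂, hk₂'⟩ := exists_between hk₁'
  have hk1 : 0 < k₁ := hk0.trans hk₁
  have hk2 : 0 < k₂ := hk1.trans hk₂
  have hlim : Tendsto (fun r => deriv ψ r / ψ r / g r * (N - η r)) atTop (𝓝 N) := by
    simpa using hhg.mul (hη.const_sub (N : ℝ))
  have hlt : (N : ℝ) < N / k₂ := by
    rw [lt_div_iff₀ hk2]; nlinarith
  obtain ⟨R, hR⟩ := eventually_atTop.1
    ((hg.and (hlim.eventually_le_const hlt)).and (eventually_gt_atTop 0))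
  have hd : ∀ r, R ≤ r → HasDerivAt (fun r => ψ r ^ N / g r - N / k₂ * M r)
      (ψ r ^ N * (deriv ψ r / ψ r / g r * (N - η r)) - N / k₂ * ψ r ^ N) r := fun r hr => by
    obtain ⟨⟨⟨hgp, hgd⟩, -⟩, hr0⟩ := hR r hr
    have hψ := h.pos hr0
    refine ((((h.hasDerivAt r).pow N).div hgd hgp.ne').sub
      ((h.vol_deriv r).const_mul _)).congr_deriv ?_
    obtain ⟨m, rfl⟩ := Nat.exists_eq_add_of_le' hN
    simp only [Nat.add_sub_cancel, Pi.pow_apply]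
    field_simp
    ring
  have hb : ∀ r, R ≤ r → ψ r ^ N / g r - N / k₂ * M r ≤ ψ R ^ N / g R - N / k₂ * M R :=
    fun r hr => le_of_hasDerivAt_nonpos
      (fun x hx => (hd x hx).continuousAt.continuousWithinAt) (fun r hr => hd r hr.le)
      (fun r hr => by
        obtain ⟨⟨-, hl⟩, hr0⟩ := hR r hr.le
        have := mul_le_mul_of_nonneg_left hl (pow_pos (h.pos hr0) N).le
        linarith) hr
  have hlt' : 0 < N / k₁ - N / k₂ := by
    have := div_lt_div_of_pos_left (by linarith : (0:ℝ) < N) hk1 hk₂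
    linarith
  have hbig := (h.vol_tendsto.const_mul_atTop hlt').eventually_ge_atTop
    (ψ R ^ N / g R - N / k₂ * M R)
  have hr1 := hhg.eventually_const_le (show k / k₁ < 1 by rwa [div_lt_one hk1])
  filter_upwards [eventually_ge_atTop R, hbig, hr1] with r hr hbr hkr
  obtain ⟨⟨⟨hgp, -⟩, -⟩, hr0⟩ := hR r hr
  have h1 : ψ r ^ N / g r ≤ N / k₁ * M r := by
    have := hb r hr
    linarith
  have h2 : k / k₁ * g r ≤ deriv ψ r / ψ r := by rwa [le_div_iff₀ hgp] at hkr
  have hM := h.vol_nonneg hr0.le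
  calc k * ψ r ^ N = k * g r * (ψ r ^ N / g r) := by field_simp
    _ ≤ k * g r * (N / k₁ * M r) := by gcongr
    _ = N * (k / k₁ * g r) * M r := by field_simp
    _ ≤ _ := by gcongr

end ModelData

namespace DecreasingSolution

variable {N : ℕ} {p q : ℝ} {ψ M u a : ℝ → ℝ}

lemma hasDerivAt_slope_rpow (hs : DecreasingSolution N p q ψ u a) (h : ModelData N ψ M)
    {r : ℝ} (hr : 0 < r) :
    HasDerivAt (fun s => a s ^ (p - 1)) (u r ^ q - N * (deriv ψ r / ψ r) * a r ^ (p - 1)) r := by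
  have hψ := h.pos hr
  have hd := (hs.flux r hr).div ((h.hasDerivAt r).pow N) (pow_pos hψ N).ne'
  refine (hd.congr_of_eventuallyEq ?_).congr_deriv ?_
  · filter_upwards [eventually_gt_nhds hr] with s hs
    have := (pow_pos (h.pos hs) N).ne'
    simp
    field_simp
  · rcases N with _ | m
    · simp
    · simp only [Nat.add_sub_cancel, Pi.pow_apply]
      field_simp
      ring

lemma hasDerivAt_slope_rpow_p (hs : DecreasingSolution N p q ψ u a) (h : ModelData N ψ M)
    (hp : 1 < p) {r : ℝ} (hr : 0 < r) :
    HasDerivAt (fun s => a s ^ p)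
      (p / (p - 1) * (a r * u r ^ q - N * (deriv ψ r / ψ r) * a r ^ p)) r := by
  have hp1 : p - 1 ≠ 0 := by linarith
  have ha := hs.slope_pos r hr
  have hd := (hs.hasDerivAt_slope_rpow h hr).rpow_const (p := p / (p - 1))
    (Or.inl (rpow_pos_of_pos ha _).ne')
  refine (hd.congr_of_eventuallyEq ?_).congr_deriv ?_
  · filter_upwards [eventually_gt_nhds hr] with s hs'
    rw [← rpow_mul (hs.slope_pos s hs').le]
    congr 1
    field_simp
  · have e1 : (a r ^ (p - 1)) ^ (p / (p - 1) - 1) = a r := by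
      rw [← rpow_mul ha.le]
      convert rpow_one _ using 2
      field_simp
      ring
    have e2 : a r ^ p = a r ^ (p - 1) * a r := by
      rw [← rpow_add_one ha.ne']; congr 1; ring
    rw [e1, e2]
    ring

/-- The Pohozaev inequality in the critical and supercritical range. -/
lemma pohozaev (hs : DecreasingSolution N p q ψ u a) (h : ModelData N ψ M) (hp : 1 < p)
    (hq0 : 0 < q + 1) (hq : 1 / (q + 1) ≤ 1 / p - 1 / (N + 1)) {r : ℝ} (hr : 0 ≤ r) :
    M r * ((p - 1) / p * a r ^ p + u r ^ (q + 1) / (q + 1)) ≤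
      ψ r ^ N * a r ^ (p - 1) * u r / (q + 1) := by
  have hp0 : 0 < p := by linarith
  have hp1 : 0 < p - 1 := by linarith
  have hd : ∀ r, 0 < r → HasDerivAt
      (fun r => M r * ((p - 1) / p * a r ^ p + u r ^ (q + 1) / (q + 1)) -
        ψ r ^ N * a r ^ (p - 1) * u r / (q + 1))
      ((((p - 1) / p + 1 / (q + 1)) * ψ r ^ N - N * (deriv ψ r / ψ r) * M r) * a r ^ p) r := by
    intro r hr
    have ha := hs.slope_pos r hr
    have hu := hs.pos r hr.le
    have hud := hs.hasDerivAt r hr.le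
    refine (((h.vol_deriv r).mul (((hs.hasDerivAt_slope_rpow_p h hp hr).const_mul ((p - 1) / p)).add
      ((hud.rpow_const (p := q + 1) (Or.inl hu.ne')).div_const (q + 1)))).sub
      (((hs.flux r hr).mul hud).div_const (q + 1))).congr_deriv ?_
    have e2 : a r ^ p = a r ^ (p - 1) * a r := by
      rw [← rpow_add_one ha.ne']; congr 1; ring
    have e3 : u r ^ (q + 1) = u r ^ q * u r := rpow_add_one hu.ne' q
    simp only [Pi.add_apply, add_sub_cancel_right, e2, e3]
    field_simp
    ring
  have hn : ∀ r, 0 < r →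
      (((p - 1) / p + 1 / (q + 1)) * ψ r ^ N - N * (deriv ψ r / ψ r) * M r) * a r ^ p ≤ 0 := by
    intro r hr
    have hψ := h.pos hr
    refine mul_nonpos_of_nonpos_of_nonneg ?_ (rpow_nonneg (hs.slope_pos r hr).le _)
    have h1 : (p - 1) / p + 1 / (q + 1) ≤ N / (N + 1) := by
      have e1 : (p - 1) / p = 1 - 1 / p := by field_simp
      have e2 : (N : ℝ) / (N + 1) = 1 - 1 / (N + 1) := by field_simp; ring
      rw [e1, e2]
      linarith
    have h2 : ψ r ^ N / (N + 1) ≤ deriv ψ r / ψ r * M r := by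
      have := h.pow_succ_le hr.le
      rw [div_le_iff₀ (by positivity), div_mul_eq_mul_div, div_mul_eq_mul_div, le_div_iff₀ hψ,
        ← pow_succ]
      linarith
    have h3 := mul_le_mul_of_nonneg_right h1 (pow_pos hψ N).le
    have h4 := mul_le_mul_of_nonneg_left h2 (Nat.cast_nonneg (α := ℝ) N)
    have e : (N : ℝ) / (N + 1) * ψ r ^ N = N * (ψ r ^ N / (N + 1)) := by ring
    linarith
  have huc : ContinuousOn u (Set.Ici 0) := fun x hx =>
    (hs.hasDerivAt x hx).continuousAt.continuousWithinAt
  have hψc : ContinuousOn ψ (Set.Ici 0) := fun x _ =>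
    (h.hasDerivAt x).continuousAt.continuousWithinAt
  have hMc : ContinuousOn M (Set.Ici 0) := fun x _ =>
    (h.vol_deriv x).continuousAt.continuousWithinAt
  have hc : ContinuousOn (fun r => M r * ((p - 1) / p * a r ^ p + u r ^ (q + 1) / (q + 1)) -
        ψ r ^ N * a r ^ (p - 1) * u r / (q + 1)) (Set.Ici 0) := by
    refine (hMc.mul (((hs.slope_cont.rpow_const fun x _ => Or.inr hp0.le).const_mul _).add
      ((huc.rpow_const fun x _ => Or.inr hq0.le).div_const _))).sub
      ((((hψc.pow N).mul (hs.slope_cont.rpow_const fun x _ => Or.inr hp1.le)).mul huc).div_const _)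
  have := le_of_hasDerivAt_nonpos hc hd hn hr
  simp only [h.vol_zero, hs.slope_zero, zero_rpow hp1.ne'] at this
  simp at this
  linarith

/-- The Pohozaev inequality keeps `-u' / u` strictly below the fast decay rate. -/
lemma exists_slope_le (hs : DecreasingSolution N p q ψ u a) (h : ModelData N ψ M) (hN : 1 ≤ N)
    (hp : 1 < p) (hpq : p < q + 1) (hq : 1 / (q + 1) ≤ 1 / p - 1 / (N + 1)) {g η : ℝ → ℝ}
    (hg : ∀ᶠ r in atTop, 0 < g r ∧ HasDerivAt g (η r * (deriv ψ r / ψ r) * g r) r)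
    (hη : Tendsto η atTop (𝓝 0))
    (hhg : Tendsto (fun r => deriv ψ r / ψ r / g r) atTop (𝓝 1)) :
    ∃ c > 0, ∀ᶠ r in atTop, (p - 1) * (a r / u r) ≤ (N - c) * (deriv ψ r / ψ r) := by
  have hq0 : 0 < q + 1 := by linarith
  have hN0 : (0 : ℝ) < N := by exact_mod_cast hN
  obtain ⟨k, hk, hk1⟩ := exists_between (show p / (q + 1) < 1 by rwa [div_lt_one hq0])
  have hk0 : 0 < k := lt_trans (by positivity) hk
  refine ⟨N * (1 - p / (q + 1) / k), ?_, ?_⟩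
  · have : p / (q + 1) / k < 1 := by rwa [div_lt_one hk0]
    have : 0 < 1 - p / (q + 1) / k := by linarith
    positivity
  filter_upwards [h.eventually_surface_le hN hg hη hhg hk0 hk1, eventually_gt_atTop 0] with r hr hr0
  have ha := hs.slope_pos r hr0
  have hu := hs.pos r hr0.le
  have hψ := h.pos hr0
  have hψN : 0 < ψ r ^ N := pow_pos hψ N
  have hd := h.deriv_pos hr0.le
  have hM := h.vol_nonneg hr0.le
  have hap : 0 < a r ^ (p - 1) := rpow_pos_of_pos ha _
  have hpo := hs.pohozaev h hp hq0 hq hr0.le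
  have e2 : a r ^ p = a r ^ (p - 1) * a r := by
    rw [← rpow_add_one ha.ne']; congr 1; ring
  have h1 : M r * ((p - 1) / p * a r) ≤ ψ r ^ N * u r / (q + 1) := by
    have h0 : 0 ≤ M r * (u r ^ (q + 1) / (q + 1)) := by positivity
    rw [mul_add, e2] at hpo
    refine le_of_mul_le_mul_left ?_ hap
    calc a r ^ (p - 1) * (M r * ((p - 1) / p * a r))
        = M r * ((p - 1) / p * (a r ^ (p - 1) * a r)) := by ring
      _ ≤ ψ r ^ N * a r ^ (p - 1) * u r / (q + 1) := by linarith
      _ = _ := by ring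
  have h2 : (p - 1) * a r * (k * ψ r ^ N) ≤
      (N * (deriv ψ r / ψ r) * (p / (q + 1)) * u r) * ψ r ^ N := by
    calc (p - 1) * a r * (k * ψ r ^ N)
        ≤ (p - 1) * a r * (N * (deriv ψ r / ψ r) * M r) := by
          have : 0 ≤ p - 1 := by linarith
          gcongr
      _ = N * (deriv ψ r / ψ r) * p * (M r * ((p - 1) / p * a r)) := by field_simp
      _ ≤ N * (deriv ψ r / ψ r) * p * (ψ r ^ N * u r / (q + 1)) := by gcongr
      _ = _ := by ring
  rw [← mul_assoc] at h2
  have h3 := le_of_mul_le_mul_right h2 hψN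
  rw [← mul_div_assoc, div_le_iff₀ hu]
  refine le_of_mul_le_mul_right (h3.trans_eq ?_) hk0
  field_simp
  ring

/-- Slow decay: `-u' / u` is negligible against a slowly varying `g` asymptotic to `ψ' / ψ`. -/
theorem tendsto_slope_div (hs : DecreasingSolution N p q ψ u a) (h : ModelData N ψ M) (hN : 1 ≤ N)
    (hp : 1 < p) (hpq : p < q + 1) (hq : 1 / (q + 1) ≤ 1 / p - 1 / (N + 1)) {g η : ℝ → ℝ}
    (hg : ∀ᶠ r in atTop, 0 < g r ∧ HasDerivAt g (η r * (deriv ψ r / ψ r) * g r) r)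
    (hη : Tendsto η atTop (𝓝 0))
    (hhg : Tendsto (fun r => deriv ψ r / ψ r / g r) atTop (𝓝 1))
    (hE : Tendsto (fun r => u r ^ (q + 1 - p) * g r ^ (-p)) atTop (𝓝 0)) :
    Tendsto (fun r => a r / u r / g r) atTop (𝓝 0) := by
  obtain ⟨c, hc, hslope⟩ := hs.exists_slope_le h hN hp hpq hq hg hη hhg
  have hp1 : 0 < p - 1 := by linarith
  set y : ℝ → ℝ := fun r => a r ^ (p - 1) * (u r * g r) ^ (1 - p) with hy
  have hyd : ∀ r, 0 < r → 0 < g r → HasDerivAt g (η r * (deriv ψ r / ψ r) * g r) r →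
      HasDerivAt y (g r * (u r ^ (q + 1 - p) * g r ^ (-p)) + y r * ((p - 1) * (a r / u r) -
        (N + (p - 1) * η r) * (deriv ψ r / ψ r))) r := by
    intro r hr hgp hgd
    have hu := hs.pos r hr.le
    have hug : 0 < u r * g r := mul_pos hu hgp
    refine ((hs.hasDerivAt_slope_rpow h hr).mul (((hs.hasDerivAt r hr.le).mul hgd).rpow_const
      (p := 1 - p) (Or.inl hug.ne'))).congr_deriv ?_
    have e1 : (u r * g r) ^ (1 - p - 1) = (u r * g r) ^ (1 - p) / (u r * g r) :=
      rpow_sub_one hug.ne' _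
    have e2 : u r ^ q * (u r * g r) ^ (1 - p) = g r * (u r ^ (q + 1 - p) * g r ^ (-p)) := by
      rw [mul_rpow hu.le hgp.le, ← mul_assoc, ← rpow_add hu, sub_eq_add_neg 1 p,
        rpow_add hgp, rpow_one, ← add_assoc, ← sub_eq_add_neg]
      ring
    rw [← e2]
    simp only [Pi.mul_apply, hy, e1]
    field_simp
    ring
  have hy0 : ∀ᶠ r in atTop, 0 ≤ y r := by
    filter_upwards [hg, eventually_gt_atTop 0] with r hr hr0
    exact mul_nonneg (rpow_nonneg (hs.slope_pos r hr0).le _)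
      (rpow_nonneg (mul_pos (hs.pos r hr0.le) hr.1).le _)
  have hylim : Tendsto y atTop (𝓝 0) := by
    refine tendsto_order.2 ⟨fun b hb => hy0.mono fun r hr => hb.trans_le hr, fun b hb => ?_⟩
    set ε := b / 2 with hε
    have hε0 : 0 < ε := by positivity
    have hE' := hE.eventually_le_const (show 0 < c / 4 * ε by positivity)
    have hη' := (hη.const_mul (p - 1)).eventually_const_le
      (show -(c / 2) < (p - 1) * 0 by simpa using hc)
    have hhg' := hhg.eventually_const_le (show (1 : ℝ) / 2 < 1 by norm_num)
    obtain ⟨R, hR⟩ := eventually_atTop.1 ((((hg.and hslope).and (hE'.and hη')).and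
      (hhg'.and hy0)).and (eventually_gt_atTop 0))
    have hd : ∀ r, R ≤ r → ∃ d ≤ 0, HasDerivAt (fun r => ψ r ^ (c / 2) * (y r - ε)) d r := by
      intro r hr
      obtain ⟨⟨⟨⟨⟨hgp, hgd⟩, hsl⟩, hEr, hηr⟩, hhr, hyr⟩, hr0⟩ := hR r hr
      have hψ := h.pos hr0
      refine ⟨_, ?_, ((h.hasDerivAt r).rpow_const (p := c / 2) (Or.inl hψ.ne')).mul
        ((hyd r hr0 hgp hgd).sub_const ε)⟩
      have hh : 0 < deriv ψ r / ψ r := div_pos (h.deriv_pos hr0.le) hψ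
      rw [rpow_sub_one hψ.ne']
      have e : deriv ψ r * (c / 2) * (ψ r ^ (c / 2) / ψ r) =
        ψ r ^ (c / 2) * (c / 2 * (deriv ψ r / ψ r)) := by ring
      rw [e, mul_assoc, ← mul_add]
      refine mul_nonpos_of_nonneg_of_nonpos (rpow_nonneg hψ.le _) ?_
      set H := deriv ψ r / ψ r
      have hgH : g r ≤ 2 * H := by
        rw [le_div_iff₀ hgp] at hhr
        linarith
      have b1 : g r * (u r ^ (q + 1 - p) * g r ^ (-p)) ≤ 2 * H * (c / 4 * ε) := by
        have : 0 ≤ u r ^ (q + 1 - p) * g r ^ (-p) :=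
          mul_nonneg (rpow_nonneg (hs.pos r hr0.le).le _) (rpow_nonneg hgp.le _)
        gcongr
      have b2 : y r * ((p - 1) * (a r / u r) - (N + (p - 1) * η r) * H) ≤
          y r * (-(c / 2) * H) := by
        refine mul_le_mul_of_nonneg_left ?_ hyr
        nlinarith
      linarith
    choose! d hdn hdd using hd
    have hb' : ∀ r, R ≤ r → ψ r ^ (c / 2) * (y r - ε) ≤ ψ R ^ (c / 2) * (y R - ε) :=
      fun r hr => le_of_hasDerivAt_nonpos (fun x hx => (hdd x hx).continuousAt.continuousWithinAt)
        (fun x hx => hdd x hx.le) (fun x hx => hdn x hx.le) hr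
    have hbig := (((tendsto_rpow_atTop (half_pos hc)).comp h.tendsto_atTop).atTop_mul_const
      hε0).eventually_gt_atTop (ψ R ^ (c / 2) * (y R - ε))
    filter_upwards [eventually_ge_atTop R, hbig, eventually_gt_atTop 0] with r hr hbr hr0
    have h1 := (hb' r hr).trans_lt hbr
    have h2 := lt_of_mul_lt_mul_left h1 (rpow_nonneg (h.pos hr0).le _)
    linarith
  have hpow := hylim.rpow_const (p := 1 / (p - 1)) (Or.inr (by positivity))
  rw [zero_rpow (by positivity)] at hpow
  refine hpow.congr' ?_
  filter_upwards [hg, eventually_gt_atTop 0] with r hr hr0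
  have ha := hs.slope_pos r hr0
  have hu := hs.pos r hr0.le
  have hug : 0 < u r * g r := mul_pos hu hr.1
  have e : y r = (a r / (u r * g r)) ^ (p - 1) := by
    rw [div_rpow ha.le hug.le, div_eq_mul_inv, ← rpow_neg hug.le, neg_sub]
  rw [e, ← rpow_mul (by positivity), mul_one_div_cancel hp1.ne', rpow_one, div_div]

/-- Decay of `u` when the volume-surface ratio grows at least like `r ^ γ`. -/
lemma tendsto_rpow_mul_rpow (hs : DecreasingSolution N p q ψ u a) (h : ModelData N ψ M)
    (hp : 1 < p) (hpq : p < q + 1) (hq : 1 / (q + 1) ≤ 1 / p - 1 / (N + 1)) {γ K : ℝ}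
    (hγ0 : 0 ≤ γ) (hγ : γ < 1) (hK : 0 < K)
    (hΘ : ∀ᶠ r in atTop, K * r ^ γ * ψ r ^ N ≤ M r) :
    Tendsto (fun r => u r ^ (q + 1 - p) * (r ^ (-γ)) ^ (-p)) atTop (𝓝 0) := by
  have hp1 : 0 < p - 1 := by linarith
  have hq0 : 0 < q + 1 := by linarith
  set β := (q + 1 - p) / (p - 1) with hβ
  have hβ0 : 0 < β := div_pos (by linarith) hp1
  set s := γ / (p - 1) with hsdef
  have hs0 : 0 ≤ s := div_nonneg hγ0 hp1.le
  set L := K ^ (1 / (p - 1)) with hL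
  have hL0 : 0 < L := rpow_pos_of_pos hK _
  have hslope : ∀ᶠ r in atTop, L * r ^ s * u r ^ (β + 1) ≤ a r := by
    filter_upwards [hΘ, eventually_gt_atTop 0] with r hr hr0
    have ha := hs.slope_pos r hr0
    have hu := hs.pos r hr0.le
    have hψN := pow_pos (h.pos hr0) N
    have hM := h.vol_nonneg hr0.le
    have hpo := hs.pohozaev h hp hq0 hq hr0.le
    have h1 : M r * u r ^ q ≤ ψ r ^ N * a r ^ (p - 1) := by
      have h0 : 0 ≤ M r * ((p - 1) / p * a r ^ p) := by positivity
      rw [mul_add, rpow_add_one hu.ne'] at hpo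
      have h2 : M r * (u r ^ q * u r / (q + 1)) ≤ ψ r ^ N * a r ^ (p - 1) * u r / (q + 1) := by
        linarith
      rw [← mul_div_assoc, div_le_div_iff_of_pos_right hq0, ← mul_assoc] at h2
      exact le_of_mul_le_mul_right h2 hu
    have h2 : K * r ^ γ * u r ^ q ≤ a r ^ (p - 1) := by
      refine le_of_mul_le_mul_left (le_trans ?_ h1) hψN
      calc ψ r ^ N * (K * r ^ γ * u r ^ q) = K * r ^ γ * ψ r ^ N * u r ^ q := by ring
        _ ≤ _ := by gcongr
    have h3 := rpow_le_rpow (by positivity) h2 (one_div_pos.2 hp1).le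
    rw [← rpow_mul ha.le, mul_one_div_cancel hp1.ne', rpow_one, mul_rpow (by positivity)
      (by positivity), mul_rpow hK.le (by positivity), ← rpow_mul hr0.le, ← rpow_mul hu.le] at h3
    convert h3 using 3
    · rw [hsdef, mul_one_div]
    · rw [hβ]; field_simp; ring
  obtain ⟨R, hR⟩ := eventually_atTop.1 (hslope.and (eventually_gt_atTop 0))
  set k := β * L / (s + 1) with hk
  have hk0 : 0 < k := by positivity
  have hd : ∀ r, R ≤ r → HasDerivAt (fun r => k * r ^ (s + 1) - u r ^ (-β))
      (β * (L * r ^ s) - β * a r * u r ^ (-(β + 1))) r := by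
    intro r hr
    obtain ⟨-, hr0⟩ := hR r hr
    refine (((hasDerivAt_rpow_const (p := s + 1) (Or.inl hr0.ne')).const_mul k).sub
      ((hs.hasDerivAt r hr0.le).rpow_const (p := -β)
        (Or.inl (hs.pos r hr0.le).ne'))).congr_deriv ?_
    rw [add_sub_cancel_right, neg_add', hk]
    field_simp
  have hb : ∀ r, R ≤ r → k * r ^ (s + 1) - u r ^ (-β) ≤ k * R ^ (s + 1) - u R ^ (-β) :=
    fun r hr => le_of_hasDerivAt_nonpos (fun x hx => (hd x hx).continuousAt.continuousWithinAt)
      (fun x hx => hd x hx.le) (fun x hx => by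
        obtain ⟨h1, hx0⟩ := hR x hx.le
        have hu := rpow_pos_of_pos (hs.pos x hx0.le) (β + 1)
        rw [rpow_neg (hs.pos x hx0.le).le, sub_nonpos, ← div_eq_mul_inv, le_div_iff₀ hu]
        calc _ = β * (L * x ^ s * u x ^ (β + 1)) := by ring
          _ ≤ _ := by gcongr) hr
  set C := |k * R ^ (s + 1) - u R ^ (-β)| with hC
  have hlow : ∀ᶠ r in atTop, k * r ^ (1 - γ) - C ≤ u r ^ (-β) * r ^ (-(γ + s)) := by
    filter_upwards [eventually_ge_atTop R, eventually_ge_atTop 1] with r hr hr1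
    have hr0 : 0 < r := by linarith
    have h1 : k * r ^ (s + 1) - C ≤ u r ^ (-β) := by
      have := hb r hr
      have := le_abs_self (k * R ^ (s + 1) - u R ^ (-β))
      linarith
    have h2 : r ^ (-(γ + s)) ≤ 1 := rpow_le_one_of_one_le_of_nonpos hr1 (by linarith)
    have h3 : 0 < r ^ (-(γ + s)) := rpow_pos_of_pos hr0 _
    have h4 : r ^ (1 - γ) = r ^ (s + 1) * r ^ (-(γ + s)) := by
      rw [← rpow_add hr0]; congr 1; ring
    have h5 := mul_le_mul_of_nonneg_right h1 h3.le
    have h6 := mul_le_mul_of_nonneg_left h2 (abs_nonneg _ : 0 ≤ C)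
    rw [h4]
    linarith
  have htop : Tendsto (fun r => u r ^ (-β) * r ^ (-(γ + s))) atTop atTop :=
    tendsto_atTop_mono' _ hlow (tendsto_atTop_add_const_right _ _
      ((tendsto_rpow_atTop (by linarith)).const_mul_atTop hk0))
  refine ((tendsto_rpow_neg_atTop hp1).comp htop).congr' ?_
  filter_upwards [eventually_gt_atTop 0] with r hr0
  have hu := hs.pos r hr0.le
  simp only [Function.comp]
  rw [mul_rpow (by positivity) (by positivity), ← rpow_mul hu.le, ← rpow_mul hr0.le,
    ← rpow_mul hr0.le]
  congr 2
  · rw [hβ]; field_simp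
  · rw [hsdef]; field_simp; ring

end DecreasingSolution

lemma IsRadialSolution.decreasingSolution {n : ℕ} {p q α : ℝ} {ψ M u : ℝ → ℝ} (hp : 1 < p)
    (hu : IsRadialSolution n p q ψ ⊤ α u) (h : ModelData (n - 1) ψ M) :
    DecreasingSolution (n - 1) p q ψ u (fun r => -deriv u r) := by
  have hp1 : 0 < p - 1 := by linarith
  have hpos : ∀ r, 0 ≤ r → 0 < u r := fun r hr => hu.pos r hr ENNReal.ofReal_lt_top
  have hcont : ContinuousOn (deriv u) (Set.Ici 0) :=
    hu.deriv_cont.mono fun r hr => ⟨hr, ENNReal.ofReal_lt_top⟩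
  have hflux : ∀ r, 0 < r →
      HasDerivAt (fun s => ψ s ^ (n - 1) * |deriv u s| ^ (p - 2) * deriv u s)
      (-(ψ r ^ (n - 1) * u r ^ q)) r := fun r hr => hu.eqn r hr ENNReal.ofReal_lt_top
  have habs : ∀ x : ℝ, |x| ^ (p - 2) * |x| = |x| ^ (p - 1) := fun x => by
    rcases eq_or_ne x 0 with rfl | hx
    · simp [zero_rpow hp1.ne']
    · rw [← rpow_add_one (abs_ne_zero.2 hx)]
      congr 1
      ring
  have hfc : ContinuousOn (fun s => ψ s ^ (n - 1) * |deriv u s| ^ (p - 2) * deriv u s)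
      (Set.Ici 0) := by
    intro x hx
    rcases (Set.mem_Ici.1 hx).eq_or_lt with rfl | hx0
    · have hz : ContinuousWithinAt (fun s => ψ s ^ (n - 1) * |deriv u s| ^ (p - 1))
          (Set.Ici 0) 0 :=
        ((h.hasDerivAt 0).continuousAt.continuousWithinAt.pow (n - 1)).mul
          ((hcont 0 hx).abs.rpow_const (Or.inr hp1.le))
      have hz' := hz.abs.tendsto
      simp only [hu.deriv_init, abs_zero, zero_rpow hp1.ne', mul_zero] at hz'
      rw [ContinuousWithinAt, hu.deriv_init, mul_zero, tendsto_zero_iff_abs_tendsto_zero]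
      refine hz'.congr fun s => ?_
      simp only [Function.comp, abs_mul, mul_assoc]
      rw [← habs, abs_mul, abs_abs]
    · exact (hflux x hx0).continuousAt.continuousWithinAt
  have hanti : StrictAntiOn (fun s => ψ s ^ (n - 1) * |deriv u s| ^ (p - 2) * deriv u s)
      (Set.Ici 0) := by
    refine strictAntiOn_of_deriv_neg (convex_Ici 0) hfc fun x hx => ?_
    rw [interior_Ici] at hx
    rw [(hflux x hx).deriv, neg_lt_zero]
    exact mul_pos (pow_pos (h.pos hx) _) (rpow_pos_of_pos (hpos x (le_of_lt hx)) _)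
  have hneg : ∀ r, 0 < r → deriv u r < 0 := fun r hr => by
    have h1 := hanti Set.self_mem_Ici hr.le hr
    simp only [hu.deriv_init, mul_zero] at h1
    by_contra! h2
    have : 0 ≤ ψ r ^ (n - 1) * |deriv u r| ^ (p - 2) * deriv u r :=
      mul_nonneg (mul_nonneg (pow_pos (h.pos hr) _).le (rpow_nonneg (abs_nonneg _) _)) h2
    linarith
  refine ⟨hpos, by simp [hu.deriv_init], hcont.neg, fun r hr => neg_pos.2 (hneg r hr),
    fun r hr => ?_, fun r hr => ?_⟩
  · rw [neg_neg]
    exact (hu.diff r hr ENNReal.ofReal_lt_top).hasDerivAt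
  · refine ((hflux r hr).neg.congr_of_eventuallyEq ?_).congr_deriv (neg_neg _)
    filter_upwards [eventually_gt_nhds hr] with s hs
    have h1 := habs (deriv u s)
    rw [abs_of_neg (hneg s hs)] at h1
    simp only [Pi.neg_apply, abs_of_neg (hneg s hs), ← h1]
    ring

/-- `(u'/u)(ψ/ψ') → 0` at infinity. -/
theorem statement_15 (n : ℕ) (hn : 2 ≤ n) (p q : ℝ) (hp1 : 1 < p) (hpn : p < n)
    (hq : (n : ℝ) * p / ((n : ℝ) - p) - 1 ≤ q)
    (ψ : ℝ → ℝ) (hψ : IsCHModel ψ)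
    (hpc : Tendsto (fun r : ℝ => ∫ s in (0:ℝ)..r, Theta n ψ s ^ (1 / (p - 1)))
      atTop atTop)
    (hcond : CondA ψ ∨ CondB ψ)
    (α : ℝ) (hα : 0 < α)
    (u : ℝ → ℝ) (hu : IsRadialSolution n p q ψ ⊤ α u) :
    Tendsto (fun r : ℝ => deriv u r / u r * (ψ r / deriv ψ r)) atTop (nhds 0) := by
  have h := hψ.modelData (n - 1)
  have hs := hu.decreasingSolution hp1 h
  have hN : 1 ≤ n - 1 := by omega
  have hcast : ((n - 1 : ℕ) : ℝ) + 1 = n := by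
    rw [← Nat.cast_add_one]
    congr 1
    omega
  have hp0 : 0 < p := by linarith
  have hnp : 0 < (n : ℝ) - p := by linarith
  have hn0 : 0 < (n : ℝ) := by linarith
  have hq1 : (n : ℝ) * p / (n - p) ≤ q + 1 := by linarith
  have hpq : p < q + 1 := by
    refine lt_of_lt_of_le ?_ hq1
    rw [lt_div_iff₀ hnp]
    nlinarith
  have hq' : 1 / (q + 1) ≤ 1 / p - 1 / (((n - 1 : ℕ) : ℝ) + 1) := by
    rw [hcast]
    calc 1 / (q + 1) ≤ 1 / ((n : ℝ) * p / (n - p)) :=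
          one_div_le_one_div_of_le (by positivity) hq1
      _ = _ := by field_simp
  have conclude : ∀ g η : ℝ → ℝ,
      (∀ᶠ r in atTop, 0 < g r ∧ HasDerivAt g (η r * (deriv ψ r / ψ r) * g r) r) →
      Tendsto η atTop (𝓝 0) → Tendsto (fun r => deriv ψ r / ψ r / g r) atTop (𝓝 1) →
      Tendsto (fun r => u r ^ (q + 1 - p) * g r ^ (-p)) atTop (𝓝 0) →
      Tendsto (fun r : ℝ => deriv u r / u r * (ψ r / deriv ψ r)) atTop (nhds 0) := by
    intro g η hg hη hhg hE
    have key := ((hs.tendsto_slope_div h hN hp1 hpq hq' hg hη hhg hE).neg).mul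
      (hhg.inv₀ one_ne_zero)
    rw [neg_zero, zero_mul] at key
    refine key.congr' ?_
    filter_upwards [hg, eventually_gt_atTop 0] with r hr hr0
    have := hr.1
    have := h.pos hr0
    have := h.deriv_pos hr0.le
    have := hs.pos r hr0.le
    field_simp
  rcases hcond with ⟨γ, l, hγ0, hγ, hl, hlim⟩ | ⟨htop, hlog⟩
  · have hg : ∀ᶠ r in atTop, 0 < l * r ^ (-γ) ∧ HasDerivAt (fun r : ℝ => l * r ^ (-γ))
        (-γ * r ^ (γ - 1) / (r ^ γ * deriv ψ r / ψ r) * (deriv ψ r / ψ r) * (l * r ^ (-γ))) r := by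
      filter_upwards [eventually_gt_atTop 0] with r hr
      refine ⟨by positivity, ((hasDerivAt_rpow_const (p := -γ) (Or.inl hr.ne')).const_mul
        l).congr_deriv ?_⟩
      have := h.pos hr
      have := h.deriv_pos hr.le
      have := rpow_pos_of_pos hr γ
      rw [rpow_sub_one hr.ne', rpow_sub_one hr.ne']
      field_simp
    have hη : Tendsto (fun r : ℝ => -γ * r ^ (γ - 1) / (r ^ γ * deriv ψ r / ψ r)) atTop (𝓝 0) := by
      have h1 : Tendsto (fun r : ℝ => r ^ (γ - 1)) atTop (𝓝 0) := by
        simpa using tendsto_rpow_neg_atTop (show 0 < 1 - γ by linarith)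
      have h2 := (h1.const_mul (-γ)).div hlim hl.ne'
      rwa [mul_zero, zero_div] at h2
    have hhg : Tendsto (fun r => deriv ψ r / ψ r / (l * r ^ (-γ))) atTop (𝓝 1) := by
      have h1 := hlim.div_const l
      rw [div_self hl.ne'] at h1
      refine h1.congr' ?_
      filter_upwards [eventually_gt_atTop 0] with r hr
      have := rpow_pos_of_pos hr γ
      have := h.pos hr
      rw [rpow_neg hr.le]
      field_simp
    refine conclude _ _ hg hη hhg ?_
    have hΘ : ∀ᶠ r in atTop, 1 / (4 * (n - 1 : ℕ) * l) * r ^ γ * ψ r ^ (n - 1) ≤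
        ∫ s in (0:ℝ)..r, ψ s ^ (n - 1) := by
      filter_upwards [h.eventually_surface_le hN hg hη hhg (k := 1 / 2) (by norm_num) (by norm_num),
        hlim.eventually_le_const (show l < 2 * l by linarith), eventually_gt_atTop 0]
        with r h1 h2 hr
      have hM := h.vol_nonneg hr.le
      have hN0 : (0 : ℝ) < (n - 1 : ℕ) := by exact_mod_cast hN
      set I := ∫ s in (0:ℝ)..r, ψ s ^ (n - 1)
      rw [mul_assoc, one_div, inv_mul_le_iff₀ (by positivity)]
      have h3 := mul_le_mul_of_nonneg_left h1 (rpow_nonneg hr.le γ)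
      have h4 := mul_le_mul_of_nonneg_left h2 (mul_nonneg hN0.le hM)
      have e : r ^ γ * ((n - 1 : ℕ) * (deriv ψ r / ψ r) * I) =
        (n - 1 : ℕ) * I * (r ^ γ * deriv ψ r / ψ r) := by ring
      rw [e] at h3
      linarith
    have h1 := (hs.tendsto_rpow_mul_rpow h hp1 hpq hq' hγ0 hγ
      (by have : (0 : ℝ) < (n - 1 : ℕ) := by exact_mod_cast hN
          positivity) hΘ).const_mul (l ^ (-p))
    rw [mul_zero] at h1
    refine h1.congr' ?_
    filter_upwards [eventually_gt_atTop 0] with r hr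
    rw [mul_rpow hl.le (by positivity)]
    ring
  · have hh : ∀ r, 0 < r → 0 < deriv ψ r / ψ r := fun r hr =>
      div_pos (h.deriv_pos hr.le) (h.pos hr)
    refine conclude (fun r => deriv ψ r / ψ r) _ ?_ hlog ?_ ?_
    · filter_upwards [eventually_gt_atTop 0] with r hr
      have hψr := h.pos hr
      have hd := h.deriv_pos hr.le
      have hdd := (h.hasDerivAt_deriv r).div (h.hasDerivAt r) hψr.ne'
      refine ⟨hh r hr, hdd.congr_deriv ?_⟩
      have := (hdd.log (hh r hr).ne').deriv
      simp only [Pi.div_apply] at this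
      rw [this]
      field_simp
    · refine tendsto_const_nhds.congr' ?_
      filter_upwards [eventually_gt_atTop 0] with r hr
      rw [div_self (hh r hr).ne']
    · have h1 := ((tendsto_rpow_neg_atTop hp0).comp htop).const_mul (α ^ (q + 1 - p))
      rw [mul_zero] at h1
      refine squeeze_zero' ?_ ?_ h1
      · filter_upwards [eventually_gt_atTop 0] with r hr
        exact mul_nonneg (rpow_nonneg (hs.pos r hr.le).le _) (rpow_nonneg (hh r hr).le _)
      · filter_upwards [eventually_gt_atTop 0] with r hr
        have hle : u r ≤ α := by
          rw [← hu.init]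
          exact le_of_hasDerivAt_nonpos
            (fun x hx => (hs.hasDerivAt x hx).continuousAt.continuousWithinAt)
            (fun x hx => hs.hasDerivAt x hx.le)
            (fun x hx => by have := hs.slope_pos x hx; linarith) hr.le
        exact mul_le_mul_of_nonneg_right
          (rpow_le_rpow (hs.pos r hr.le).le hle (by linarith)) (rpow_nonneg (hh r hr).le _)
end

section
/- Let ψ be a Cartan–Hadamard model function with ∫₀^∞ Θ(s)^{1/(p−1)} ds = +∞ and such that either (a) there exist γ ∈ [0,1) and ℓ ∈ (0,∞) with lim_{r→∞} r^γ·ψ′(r)/ψ(r) = ℓ, or (b) lim_{r→∞} ψ′(r)/ψ(r) = +∞ and lim_{r→∞} (ψ(r)/ψ′(r))·(d/dr) log(ψ′(r)/ψ(r)) = 0. Let u be a global radial solution. Then lim_{r→∞} (−u′(r))·u(r)^{−q/(p−1)}·(ψ′(r)/ψ(r))^{1/(p−1)} = (1/(n−1))^{1/(p−1)}. -/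
open Real Filter MeasureTheory
open scoped ENNReal Topology

/-- If `f` decreases at a definite rate with respect to a divergent clock `G` as long as it stays
above the level `L`, then eventually `f ≤ L`. -/
theorem eventually_le_of_deriv_le_clock {f f' g G : ℝ → ℝ} {L c : ℝ} (hc : 0 < c)
    (hf : ∀ r, 0 < r → HasDerivAt f (f' r) r) (hG : ∀ r, 0 < r → HasDerivAt G (g r) r)
    (hg : ∀ r, 0 < r → 0 < g r) (hGtop : Tendsto G atTop atTop)
    (h : ∀ᶠ r in atTop, L ≤ f r → f' r ≤ -(c * g r)) : ∀ᶠ r in atTop, f r ≤ L := by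
  obtain ⟨R, hR⟩ := eventually_atTop.1 (h.and (eventually_gt_atTop 0))
  obtain ⟨r₀, hr₀, hfr₀⟩ : ∃ r₀, R ≤ r₀ ∧ f r₀ < L := by
    by_contra! hcon
    have hanti : AntitoneOn (fun r => f r + c * G r) (Set.Ici R) := by
      have hd : ∀ r ∈ Set.Ici R, HasDerivAt (fun r => f r + c * G r) (f' r + c * g r) r :=
        fun r hr => (hf r (hR r hr).2).add ((hG r (hR r hr).2).const_mul c)
      refine antitoneOn_of_hasDerivWithinAt_nonpos (convex_Ici R)
        (fun r hr => (hd r hr).continuousAt.continuousWithinAt)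
        (fun r hr => (hd r (interior_subset hr)).hasDerivWithinAt) fun r hr => ?_
      have hr' : R ≤ r := interior_subset hr
      linarith [(hR r hr').1 (hcon r hr')]
    obtain ⟨r, hr, hrR⟩ := ((hGtop.eventually_gt_atTop ((f R + c * G R - L) / c)).and
      (eventually_ge_atTop R)).exists
    have h1 := hanti Set.self_mem_Ici hrR hrR
    have h2 := hcon r hrR
    rw [div_lt_iff₀ hc] at hr
    simp only at h1
    linarith
  filter_upwards [eventually_ge_atTop r₀] with r hr
  have hR' : ∀ s ∈ Set.Icc r₀ r, R ≤ s := fun s hs => hr₀.trans hs.1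
  refine image_le_of_deriv_right_lt_deriv_boundary (f := f) (f' := f') (B := fun _ => L)
    (B' := fun _ => 0) (a := r₀) (b := r)
    (fun s hs => (hf s (hR s (hR' s hs)).2).continuousAt.continuousWithinAt)
    (fun s hs => (hf s (hR s (hr₀.trans hs.1)).2).hasDerivWithinAt) hfr₀.le
    (fun s => hasDerivAt_const s L) (fun s hs hs' => ?_) ⟨hr, le_rfl⟩
  obtain ⟨h1, h2⟩ := hR s (hr₀.trans hs.1)
  linarith [h1 hs'.ge, mul_pos hc (hg s h2)]

theorem eventually_ge_of_clock_le_deriv {f f' g G : ℝ → ℝ} {L c : ℝ} (hc : 0 < c)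
    (hf : ∀ r, 0 < r → HasDerivAt f (f' r) r) (hG : ∀ r, 0 < r → HasDerivAt G (g r) r)
    (hg : ∀ r, 0 < r → 0 < g r) (hGtop : Tendsto G atTop atTop)
    (h : ∀ᶠ r in atTop, f r ≤ L → c * g r ≤ f' r) : ∀ᶠ r in atTop, L ≤ f r := by
  have := eventually_le_of_deriv_le_clock (f := fun r => -f r) (f' := fun r => -f' r) (L := -L) hc
    (fun r hr => (hf r hr).neg) hG hg hGtop
    (h.mono fun r hr hL => neg_le_neg (hr (neg_le_neg_iff.1 hL)))
  exact this.mono fun r hr => neg_le_neg_iff.1 hr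

theorem eventually_gt_of_linear_ode {y y' a g G : ℝ → ℝ} {m b : ℝ} (hm : 0 < m) (hb : b < 1 / m)
    (hy : ∀ r, 0 < r → HasDerivAt y (y' r) r) (hG : ∀ r, 0 < r → HasDerivAt G (g r) r)
    (hg : ∀ r, 0 < r → 0 < g r) (hGtop : Tendsto G atTop atTop)
    (ha : Tendsto a atTop (𝓝 m))
    (h : ∀ r, 0 < r → g r * (1 - y r * a r) ≤ y' r) : ∀ᶠ r in atTop, b < y r := by
  obtain ⟨b', hblt, hb'⟩ := exists_between (max_lt hb (one_div_pos.2 hm))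
  have hb0 : 0 < b' := (le_max_right _ _).trans_lt hblt
  have hbm : b' * m < 1 := by rwa [lt_div_iff₀ hm] at hb'
  have hlim : Tendsto (fun r => 1 - b' * a r) atTop (𝓝 (1 - b' * m)) :=
    tendsto_const_nhds.sub (ha.const_mul b')
  have hc : 0 < (1 - b' * m) / 2 := by linarith
  have key := eventually_ge_of_clock_le_deriv (L := b') hc hy hG hg hGtop (by
    filter_upwards [hlim.eventually_const_lt (show (1 - b' * m) / 2 < 1 - b' * m by linarith),
      ha.eventually_const_lt hm, eventually_gt_atTop 0] with r h1 h2 h3 hL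
    refine le_trans ?_ (h r h3)
    rw [mul_comm]
    refine mul_le_mul_of_nonneg_left ?_ (hg r h3).le
    nlinarith [mul_le_mul_of_nonneg_right hL h2.le])
  exact key.mono fun r hr => ((le_max_left _ _).trans_lt hblt).trans_le hr

theorem eventually_lt_of_linear_ode {y y' a g G : ℝ → ℝ} {m b : ℝ} (hm : 0 < m) (hb : 1 / m < b)
    (hy : ∀ r, 0 < r → HasDerivAt y (y' r) r) (hG : ∀ r, 0 < r → HasDerivAt G (g r) r)
    (hg : ∀ r, 0 < r → 0 < g r) (hGtop : Tendsto G atTop atTop)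
    (ha : Tendsto a atTop (𝓝 m))
    (h : ∀ r, 0 < r → y' r ≤ g r * (1 - y r * a r)) : ∀ᶠ r in atTop, y r < b := by
  obtain ⟨b', hb', hblt⟩ := exists_between hb
  have hbm : 1 < b' * m := by rwa [div_lt_iff₀ hm] at hb'
  have hlim : Tendsto (fun r => b' * a r - 1) atTop (𝓝 (b' * m - 1)) :=
    (ha.const_mul b').sub_const 1
  have hc : 0 < (b' * m - 1) / 2 := by linarith
  have key := eventually_le_of_deriv_le_clock (L := b') hc hy hG hg hGtop (by
    filter_upwards [hlim.eventually_const_lt (show (b' * m - 1) / 2 < b' * m - 1 by linarith),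
      ha.eventually_const_lt hm, eventually_gt_atTop 0] with r h1 h2 h3 hL
    refine (h r h3).trans ?_
    rw [mul_comm _ (g r), ← mul_neg]
    refine mul_le_mul_of_nonneg_left ?_ (hg r h3).le
    nlinarith [mul_le_mul_of_nonneg_right hL h2.le])
  exact key.mono fun r hr => hr.trans_lt hblt

/-- Solutions of `y' = g (1 - a y)` with `a → m` and divergent clock `∫ g` converge to `1 / m`. -/
theorem tendsto_of_linear_ode {y a g G : ℝ → ℝ} {m : ℝ} (hm : 0 < m)
    (hy : ∀ r, 0 < r → HasDerivAt y (g r * (1 - y r * a r)) r)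
    (hG : ∀ r, 0 < r → HasDerivAt G (g r) r)
    (hg : ∀ r, 0 < r → 0 < g r) (hGtop : Tendsto G atTop atTop)
    (ha : Tendsto a atTop (𝓝 m)) :
    Tendsto y atTop (𝓝 (1 / m)) :=
  tendsto_order.2
    ⟨fun _ hb => eventually_gt_of_linear_ode hm hb hy hG hg hGtop ha fun _ _ => le_rfl,
      fun _ hb => eventually_lt_of_linear_ode hm hb hy hG hg hGtop ha fun _ _ => le_rfl⟩

theorem hasDerivAt_normalized_flux {u v g : ℝ → ℝ} {e m q r h g' : ℝ}
    (hu : 0 < u r) (hg : 0 < g r)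
    (hu' : HasDerivAt u (-(v r ^ e)) r) (hv' : HasDerivAt v (u r ^ q - m * h * v r) r)
    (hg' : HasDerivAt g g' r) :
    HasDerivAt (fun s => v s * g s * u s ^ (-q))
      (g r * (1 - v r * g r * u r ^ (-q) *
        (m * (h / g r) - g' / g r ^ 2 - q * (v r ^ e / (u r * g r))))) r := by
  refine ((hv'.mul hg').mul (hu'.rpow_const (Or.inl hu.ne'))).congr_deriv ?_
  rw [rpow_sub_one hu.ne', rpow_neg hu.le]
  have := rpow_pos_of_pos hu q
  simp only [Pi.mul_apply]
  field_simp
  ring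

theorem hasDerivAt_normalized_amplitude {u v g : ℝ → ℝ} {e q r g' : ℝ}
    (hu : 0 < u r) (hv : 0 < v r) (hg : 0 < g r)
    (hu' : HasDerivAt u (-(v r ^ e)) r) (hg' : HasDerivAt g g' r) :
    HasDerivAt (fun s => u s ^ (1 - q * e) * g s ^ (1 + e))
      (g r * ((q * e - 1) * (v r * g r * u r ^ (-q)) ^ e +
        (1 + e) * (g' / g r ^ 2) * (u r ^ (1 - q * e) * g r ^ (1 + e)))) r := by
  refine ((hu'.rpow_const (Or.inl hu.ne')).mul (hg'.rpow_const (Or.inl hg.ne'))).congr_deriv ?_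
  have h1 : (v r * g r * u r ^ (-q)) ^ e = v r ^ e * g r ^ e * u r ^ (-(q * e)) := by
    rw [mul_rpow (by positivity) (by positivity), mul_rpow hv.le hg.le, ← rpow_mul hu.le]
    ring_nf
  have h2 : g r ^ (1 + e - 1) = g r ^ e := by ring_nf
  have h3 : u r ^ (1 - q * e - 1) = u r ^ (-(q * e)) := by ring_nf
  rw [h1, h2, h3, rpow_add hg, rpow_one]
  field_simp
  ring

theorem hasDerivAt_normalized_slope {u v g : ℝ → ℝ} {e m q r h g' : ℝ}
    (hu : 0 < u r) (hv : 0 < v r) (hg : 0 < g r)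
    (hu' : HasDerivAt u (-(v r ^ e)) r) (hv' : HasDerivAt v (u r ^ q - m * h * v r) r)
    (hg' : HasDerivAt g g' r) :
    HasDerivAt (fun s => v s ^ e / (u s * g s))
      (g r * (v r ^ e / (u r * g r) * (e * ((v r * g r * u r ^ (-q))⁻¹ - m * (h / g r)) +
        v r ^ e / (u r * g r) - g' / g r ^ 2))) r := by
  refine ((hv'.rpow_const (Or.inl hv.ne')).div (hu'.mul hg') (mul_pos hu hg).ne').congr_deriv ?_
  rw [rpow_sub_one hv.ne', rpow_neg hu.le]
  have := rpow_pos_of_pos hu q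
  simp only [Pi.mul_apply]
  field_simp
  ring

theorem slope_eq_flux_rpow_div_amplitude {u v g e q : ℝ} (hu : 0 < u) (hv : 0 < v) (hg : 0 < g) :
    v ^ e / (u * g) * (u ^ (1 - q * e) * g ^ (1 + e)) = (v * g * u ^ (-q)) ^ e := by
  rw [mul_rpow (by positivity) (by positivity), mul_rpow hv.le hg.le, ← rpow_mul hu.le,
    rpow_add hg, rpow_one, sub_eq_add_neg, rpow_add hu, rpow_one, neg_mul]
  field_simp

/-- For positive solutions of `u' = -v ^ e`, `v' = u ^ q - m h v` with slowly varying `h ∼ g`,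
a bound on the logarithmic slope of `u` below the fast-decay rate forces `v g / u ^ q → 1 / m`. -/
theorem tendsto_normalized_flux {u v h g g' G : ℝ → ℝ} {e m q X : ℝ}
    (he : 0 < e) (hm : 0 < m) (hqe : 1 < q * e)
    (hu : ∀ r, 0 < r → 0 < u r) (hv : ∀ r, 0 < r → 0 < v r)
    (hu' : ∀ r, 0 < r → HasDerivAt u (-(v r ^ e)) r)
    (hv' : ∀ r, 0 < r → HasDerivAt v (u r ^ q - m * h r * v r) r)
    (hg : ∀ r, 0 < r → 0 < g r) (hg' : ∀ r, 0 < r → HasDerivAt g (g' r) r)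
    (hG : ∀ r, 0 < r → HasDerivAt G (g r) r) (hGtop : Tendsto G atTop atTop)
    (hh : Tendsto (fun r => h r / g r) atTop (𝓝 1))
    (hg2 : Tendsto (fun r => g' r / g r ^ 2) atTop (𝓝 0))
    (hX : X < e * m) (hx : ∀ᶠ r in atTop, v r ^ e / (u r * g r) ≤ X) :
    Tendsto (fun r => v r * g r * u r ^ (-q)) atTop (𝓝 (1 / m)) := by
  have hq : 0 < q := by
    by_contra! hq
    nlinarith
  have hz0 : ∀ r, 0 < r → 0 < v r * g r * u r ^ (-q) := fun r hr =>
    mul_pos (mul_pos (hv r hr) (hg r hr)) (rpow_pos_of_pos (hu r hr) _)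
  have hx0 : ∀ r, 0 < r → 0 < v r ^ e / (u r * g r) := fun r hr =>
    div_pos (rpow_pos_of_pos (hv r hr) _) (mul_pos (hu r hr) (hg r hr))
  have hz' := fun r (hr : 0 < r) =>
    hasDerivAt_normalized_flux (hu r hr) (hg r hr) (hu' r hr) (hv' r hr) (hg' r hr)
  have ha : Tendsto (fun r => m * (h r / g r) - g' r / g r ^ 2) atTop (𝓝 m) := by
    simpa using (hh.const_mul m).sub hg2
  have hzlow : ∀ᶠ r in atTop, 1 / (2 * m) < v r * g r * u r ^ (-q) := by
    refine eventually_gt_of_linear_ode hm ?_ hz' hG hg hGtop ha fun r hr => ?_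
    · exact one_div_lt_one_div_of_lt hm (by linarith)
    · refine mul_le_mul_of_nonneg_left ?_ (hg r hr).le
      have := mul_pos (hz0 r hr) (mul_pos hq (hx0 r hr))
      linarith
  have hσtop : Tendsto (fun r => u r ^ (1 - q * e) * g r ^ (1 + e)) atTop atTop := by
    refine tendsto_atTop.2 fun M => ?_
    set c := (q * e - 1) * (1 / (2 * m)) ^ e with hc
    have hc0 : 0 < c := mul_pos (by linarith) (by positivity)
    have herr : Tendsto (fun r => (1 + e) * |g' r / g r ^ 2| * |M|) atTop (𝓝 0) := by
      simpa using (hg2.abs.const_mul (1 + e)).mul_const |M|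
    refine eventually_ge_of_clock_le_deriv (half_pos hc0) (fun r hr =>
      hasDerivAt_normalized_amplitude (q := q) (hu r hr) (hv r hr) (hg r hr) (hu' r hr) (hg' r hr))
      hG hg hGtop ?_
    filter_upwards [hzlow, herr.eventually_lt_const (half_pos hc0), eventually_gt_atTop 0]
      with r h1 h2 h3 hL
    rw [mul_comm]
    refine mul_le_mul_of_nonneg_left ?_ (hg r h3).le
    have hσ0 : 0 < u r ^ (1 - q * e) * g r ^ (1 + e) :=
      mul_pos (rpow_pos_of_pos (hu r h3) _) (rpow_pos_of_pos (hg r h3) _)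
    have h4 : c ≤ (q * e - 1) * (v r * g r * u r ^ (-q)) ^ e :=
      mul_le_mul_of_nonneg_left (rpow_le_rpow (by positivity) h1.le he.le) (by linarith)
    have h5 : |(1 + e) * (g' r / g r ^ 2) * (u r ^ (1 - q * e) * g r ^ (1 + e))| ≤
        (1 + e) * |g' r / g r ^ 2| * |M| := by
      rw [abs_mul, abs_mul, abs_of_pos (by linarith : 0 < 1 + e), abs_of_pos hσ0]
      exact mul_le_mul_of_nonneg_left (hL.trans (le_abs_self M)) (by positivity)
    linarith [neg_abs_le ((1 + e) * (g' r / g r ^ 2) * (u r ^ (1 - q * e) * g r ^ (1 + e)))]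
  have hx_lim : Tendsto (fun r => v r ^ e / (u r * g r)) atTop (𝓝 0) := by
    refine tendsto_order.2 ⟨fun b hb => (eventually_gt_atTop 0).mono
      fun r hr => hb.trans (hx0 r hr), fun b hb => ?_⟩
    have hδ : 0 < b / 2 := half_pos hb
    set η := (e * m - X) / 2 with hη
    have hη0 : 0 < η := by rw [hη]; linarith
    have hrate : Tendsto (fun r => e * ((b / 2 * (u r ^ (1 - q * e) * g r ^ (1 + e))) ^ (-(1 / e)) -
        m * (h r / g r)) + X - g' r / g r ^ 2) atTop (𝓝 (e * (0 - m * 1) + X - 0)) := by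
      refine ((((Tendsto.sub ?_ (hh.const_mul m)).const_mul e).add_const X).sub hg2)
      exact (tendsto_rpow_neg_atTop (one_div_pos.2 he)).comp (hσtop.const_mul_atTop hδ)
    have key := eventually_le_of_deriv_le_clock (L := b / 2) (mul_pos hδ hη0) (fun r hr =>
      hasDerivAt_normalized_slope (hu r hr) (hv r hr) (hg r hr) (hu' r hr) (hv' r hr) (hg' r hr))
      hG hg hGtop (by
        filter_upwards [hx, hrate.eventually_lt_const
          (show e * (0 - m * 1) + X - 0 < -η by rw [hη]; linarith), eventually_gt_atTop 0]
          with r h1 h2 h3 hL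
        have hσ0 : 0 < u r ^ (1 - q * e) * g r ^ (1 + e) :=
          mul_pos (rpow_pos_of_pos (hu r h3) _) (rpow_pos_of_pos (hg r h3) _)
        have h4 : (v r * g r * u r ^ (-q))⁻¹ ≤
            (b / 2 * (u r ^ (1 - q * e) * g r ^ (1 + e))) ^ (-(1 / e)) := by
          have h5 : (v r * g r * u r ^ (-q))⁻¹ =
              ((v r * g r * u r ^ (-q)) ^ e) ^ (-(1 / e)) := by
            rw [← rpow_mul (hz0 r h3).le, mul_neg, mul_one_div_cancel he.ne', rpow_neg_one]
          rw [h5, ← slope_eq_flux_rpow_div_amplitude (hu r h3) (hv r h3) (hg r h3)]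
          exact rpow_le_rpow_of_nonpos (mul_pos hδ hσ0) (mul_le_mul_of_nonneg_right hL hσ0.le)
            (neg_nonpos.2 (one_div_pos.2 he).le)
        have h6 := mul_le_mul_of_nonneg_left h4 he.le
        have h7 : e * ((v r * g r * u r ^ (-q))⁻¹ - m * (h r / g r)) +
            v r ^ e / (u r * g r) - g' r / g r ^ 2 ≤ -η := by linarith
        have h8 : v r ^ e / (u r * g r) * (e * ((v r * g r * u r ^ (-q))⁻¹ - m * (h r / g r)) +
            v r ^ e / (u r * g r) - g' r / g r ^ 2) ≤ -(b / 2 * η) := by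
          refine (mul_le_mul_of_nonneg_left h7 (hx0 r h3).le).trans ?_
          linarith [mul_le_mul_of_nonneg_right hL hη0.le]
        linarith [mul_le_mul_of_nonneg_left h8 (hg r h3).le])
    exact key.mono fun r hr => hr.trans_lt (by linarith)
  refine tendsto_of_linear_ode hm hz' hG hg hGtop ?_
  simpa using ha.sub (hx_lim.const_mul q)

theorem IsCHModel.differentiable_deriv {ψ : ℝ → ℝ} (hψ : IsCHModel ψ) :
    Differentiable ℝ (deriv ψ) := by
  have h : ContDiff ℝ ((1 : ℕ∞) + 1) ψ := hψ.1.of_le (by exact_mod_cast le_top)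
  exact (contDiff_succ_iff_deriv.1 h).2.2.differentiable (by simp)

theorem IsCHModel.hasDerivAt {ψ : ℝ → ℝ} (hψ : IsCHModel ψ) (r : ℝ) :
    HasDerivAt ψ (deriv ψ r) r :=
  (hψ.1.differentiable (by simp) r).hasDerivAt

theorem IsCHModel.one_le_deriv {ψ : ℝ → ℝ} (hψ : IsCHModel ψ) {r : ℝ} (hr : 0 ≤ r) :
    1 ≤ deriv ψ r := by
  have hmono : MonotoneOn (deriv ψ) (Set.Ici 0) :=
    monotoneOn_of_deriv_nonneg (convex_Ici 0) hψ.differentiable_deriv.continuous.continuousOn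
      hψ.differentiable_deriv.differentiableOn fun s hs => hψ.2.2.2.1 s (interior_subset hs)
  simpa [hψ.2.2.1] using hmono Set.self_mem_Ici hr hr

theorem IsCHModel.le_self {ψ : ℝ → ℝ} (hψ : IsCHModel ψ) {r : ℝ} (hr : 0 ≤ r) : r ≤ ψ r := by
  have hmono : MonotoneOn (fun s => ψ s - s) (Set.Ici 0) :=
    monotoneOn_of_hasDerivWithinAt_nonneg (convex_Ici 0)
      (hψ.1.continuous.sub continuous_id).continuousOn
      (fun s _ => ((hψ.hasDerivAt s).sub (hasDerivAt_id s)).hasDerivWithinAt)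
      fun s hs => sub_nonneg.2 (hψ.one_le_deriv (interior_subset hs))
  simpa [hψ.2.1] using hmono Set.self_mem_Ici hr hr

theorem IsCHModel.hasDerivAt_volume {ψ : ℝ → ℝ} (hψ : IsCHModel ψ) (k : ℕ) (r : ℝ) :
    HasDerivAt (fun r => ∫ s in (0:ℝ)..r, ψ s ^ k) (ψ r ^ k) r :=
  (hψ.1.continuous.pow k).integral_hasStrictDerivAt 0 r |>.hasDerivAt

theorem IsCHModel.volume_nonneg {ψ : ℝ → ℝ} (hψ : IsCHModel ψ) (k : ℕ) {r : ℝ} (hr : 0 ≤ r) :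
    0 ≤ ∫ s in (0:ℝ)..r, ψ s ^ k :=
  intervalIntegral.integral_nonneg hr fun _ hs => pow_nonneg (hs.1.trans (hψ.le_self hs.1)) k

/-- Convexity of `ψ` gives `ψ ^ n / n ≤ ψ' ∫ ψ ^ (n - 1)`. -/
theorem IsCHModel.pow_le_deriv_mul_volume {ψ : ℝ → ℝ} (hψ : IsCHModel ψ) {n : ℕ} (hn : n ≠ 0)
    {r : ℝ} (hr : 0 ≤ r) :
    ψ r ^ n / n ≤ deriv ψ r * ∫ s in (0:ℝ)..r, ψ s ^ (n - 1) := by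
  have hn' : (n : ℝ) ≠ 0 := Nat.cast_ne_zero.2 hn
  have hd : ∀ s, HasDerivAt
      (fun r => deriv ψ r * (∫ s in (0:ℝ)..r, ψ s ^ (n - 1)) - ψ r ^ n / n)
      (deriv (deriv ψ) s * ∫ t in (0:ℝ)..s, ψ t ^ (n - 1)) s := fun s => by
    refine (((hψ.differentiable_deriv s).hasDerivAt.mul (hψ.hasDerivAt_volume (n - 1) s)).sub
      (((hψ.hasDerivAt s).pow n).div_const (n : ℝ))).congr_deriv ?_
    field_simp
    ring
  have hmono := monotoneOn_of_hasDerivWithinAt_nonneg (convex_Ici (0 : ℝ))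
    (fun s _ => (hd s).continuousAt.continuousWithinAt)
    (fun s _ => (hd s).hasDerivWithinAt)
    fun s hs => mul_nonneg (hψ.2.2.2.1 s (interior_subset hs))
      (hψ.volume_nonneg (n - 1) (interior_subset hs))
  have := hmono Set.self_mem_Ici hr hr
  simp [hψ.2.1, hn] at this
  linarith

theorem IsCHModel.hasDerivAt_pow {ψ : ℝ → ℝ} (hψ : IsCHModel ψ) {n : ℕ} (hn : 2 ≤ n)
    {r : ℝ} (hr : 0 < r) :
    HasDerivAt (fun s => ψ s ^ (n - 1))
      (((n : ℝ) - 1) * (deriv ψ r / ψ r) * ψ r ^ (n - 1)) r := by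
  refine ((hψ.hasDerivAt r).pow (n - 1)).congr_deriv ?_
  obtain ⟨k, rfl⟩ := Nat.exists_eq_add_of_le hn
  have := (hψ.2.2.2.2 r hr).ne'
  simp only [show 2 + k - 1 = k + 1 by omega, Nat.add_sub_cancel, pow_succ]
  push_cast
  field_simp
  ring

theorem IsCHModel.hasDerivAt_Theta {ψ : ℝ → ℝ} (hψ : IsCHModel ψ) {n : ℕ} (hn : 2 ≤ n)
    {r : ℝ} (hr : 0 < r) :
    HasDerivAt (Theta n ψ) (1 - ((n : ℝ) - 1) * (deriv ψ r / ψ r) * Theta n ψ r) r := by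
  have h0 := hψ.2.2.2.2 r hr
  refine ((hψ.hasDerivAt_volume (n - 1) r).div (hψ.hasDerivAt_pow hn hr)
    (pow_pos h0 _).ne').congr_deriv ?_
  unfold Theta
  field_simp

theorem IsCHModel.tendsto_Theta_mul {ψ g g' G : ℝ → ℝ} (hψ : IsCHModel ψ) {n : ℕ} (hn : 2 ≤ n)
    (hg : ∀ r, 0 < r → 0 < g r) (hg' : ∀ r, 0 < r → HasDerivAt g (g' r) r)
    (hG : ∀ r, 0 < r → HasDerivAt G (g r) r) (hGtop : Tendsto G atTop atTop)
    (hh : Tendsto (fun r => deriv ψ r / ψ r / g r) atTop (𝓝 1))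
    (hg2 : Tendsto (fun r => g' r / g r ^ 2) atTop (𝓝 0)) :
    Tendsto (fun r => Theta n ψ r * g r) atTop (𝓝 (1 / ((n : ℝ) - 1))) := by
  have hm : (0 : ℝ) < n - 1 := by
    have : (2 : ℝ) ≤ n := by exact_mod_cast hn
    linarith
  refine tendsto_of_linear_ode (a := fun r => ((n : ℝ) - 1) * (deriv ψ r / ψ r / g r) -
    g' r / g r ^ 2) hm (fun r hr => ?_) hG hg hGtop ?_
  · refine ((hψ.hasDerivAt_Theta hn hr).mul (hg' r hr)).congr_deriv ?_
    have := hg r hr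
    field_simp
    ring
  · simpa using (hh.const_mul ((n : ℝ) - 1)).sub hg2

/-- Either growth condition provides a slowly varying `g ∼ ψ' / ψ` with divergent primitive. -/
theorem IsCHModel.exists_slowly_varying {ψ : ℝ → ℝ} (hψ : IsCHModel ψ) (h : CondA ψ ∨ CondB ψ) :
    ∃ g g' G : ℝ → ℝ, (∀ r, 0 < r → 0 < g r) ∧ (∀ r, 0 < r → HasDerivAt g (g' r) r) ∧
      (∀ r, 0 < r → HasDerivAt G (g r) r) ∧ Tendsto G atTop atTop ∧
      Tendsto (fun r => deriv ψ r / ψ r / g r) atTop (𝓝 1) ∧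
      Tendsto (fun r => g' r / g r ^ 2) atTop (𝓝 0) := by
  rcases h with ⟨γ, ℓ, _, hγ, hℓ, hlim⟩ | ⟨_, hlim⟩
  · refine ⟨fun r => ℓ * r ^ (-γ), fun r => ℓ * (-γ * r ^ (-γ - 1)),
      fun r => ℓ / (1 - γ) * r ^ (1 - γ), fun r hr => mul_pos hℓ (rpow_pos_of_pos hr _),
      fun r hr => (hasDerivAt_rpow_const (Or.inl hr.ne')).const_mul ℓ, fun r hr => ?_,
      (tendsto_rpow_atTop (by linarith)).const_mul_atTop (div_pos hℓ (by linarith)), ?_, ?_⟩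
    · refine ((hasDerivAt_rpow_const (p := 1 - γ) (Or.inl hr.ne')).const_mul
        (ℓ / (1 - γ))).congr_deriv ?_
      have : 1 - γ ≠ 0 := by linarith
      rw [show 1 - γ - 1 = -γ by ring]
      field_simp
    · have := hlim.div_const ℓ
      rw [div_self hℓ.ne'] at this
      refine this.congr' ?_
      filter_upwards [eventually_gt_atTop 0] with r hr
      have := hψ.2.2.2.2 r hr
      have := rpow_pos_of_pos hr γ
      rw [rpow_neg hr.le]
      field_simp
    · have := (tendsto_rpow_neg_atTop (show 0 < 1 - γ by linarith)).const_mul (-γ / ℓ)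
      rw [mul_zero] at this
      refine this.congr' ?_
      filter_upwards [eventually_gt_atTop 0] with r hr
      have h1 : r ^ (-γ - 1) = r ^ (-γ) * r ^ (-γ) * r ^ (-(1 - γ)) := by
        rw [← rpow_add hr, ← rpow_add hr]
        ring_nf
      have := rpow_pos_of_pos hr (-γ)
      rw [h1]
      field_simp
  · have hg0 : ∀ r, 0 < r → 0 < deriv ψ r / ψ r := fun r hr =>
      div_pos (one_pos.trans_le (hψ.one_le_deriv hr.le)) (hψ.2.2.2.2 r hr)
    have hg' : ∀ r, 0 < r → HasDerivAt (fun s => deriv ψ s / ψ s)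
        (deriv (fun s => deriv ψ s / ψ s) r) r := fun r hr =>
      ((hψ.differentiable_deriv r).fun_div (hψ.hasDerivAt r).differentiableAt
        (hψ.2.2.2.2 r hr).ne').hasDerivAt
    refine ⟨fun r => deriv ψ r / ψ r, _, fun r => log (ψ r), hg0, hg',
      fun r hr => (hψ.hasDerivAt r).log (hψ.2.2.2.2 r hr).ne', ?_, ?_, ?_⟩
    · refine tendsto_log_atTop.comp (tendsto_atTop_mono' _ ?_ tendsto_id)
      exact (eventually_ge_atTop 0).mono fun r hr => hψ.le_self hr
    · refine tendsto_const_nhds.congr' ?_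
      filter_upwards [eventually_gt_atTop 0] with r hr
      exact (div_self (hg0 r hr).ne').symm
    · refine hlim.congr' ?_
      filter_upwards [eventually_gt_atTop 0] with r hr
      rw [((hg' r hr).log (hg0 r hr).ne').deriv, ← inv_div (deriv ψ r) (ψ r)]
      have := hg0 r hr
      rw [sq, ← div_div, inv_mul_eq_div]

namespace IsRadialSolution

variable {n : ℕ} {p q : ℝ} {ψ : ℝ → ℝ} {α : ℝ} {u : ℝ → ℝ}

theorem pos_of_nonneg (hu : IsRadialSolution n p q ψ ⊤ α u) {r : ℝ} (hr : 0 ≤ r) : 0 < u r :=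
  hu.pos r hr ENNReal.ofReal_lt_top

theorem continuousOn_deriv (hu : IsRadialSolution n p q ψ ⊤ α u) :
    ContinuousOn (deriv u) (Set.Ici 0) :=
  hu.deriv_cont.mono fun _ hr => ⟨hr, ENNReal.ofReal_lt_top⟩

theorem hasDerivAt (hu : IsRadialSolution n p q ψ ⊤ α u) {r : ℝ} (hr : 0 ≤ r) :
    HasDerivAt u (deriv u r) r :=
  (hu.diff r hr ENNReal.ofReal_lt_top).hasDerivAt

theorem deriv_neg (hu : IsRadialSolution n p q ψ ⊤ α u) (hψ : IsCHModel ψ) (hn : 2 ≤ n)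
    (hp : 1 < p) {r : ℝ} (hr : 0 < r) : deriv u r < 0 := by
  set W : ℝ → ℝ := fun s => ψ s ^ (n - 1) * |deriv u s| ^ (p - 2) * deriv u s with hW
  have hWd : ∀ s, 0 < s → HasDerivAt W (-(ψ s ^ (n - 1) * u s ^ q)) s := fun s hs =>
    hu.eqn s hs ENNReal.ofReal_lt_top
  have hψ0 : ψ 0 ^ (n - 1) = 0 := by rw [hψ.2.1, zero_pow (by omega)]
  have hW0 : W 0 = 0 := by simp [hW, hψ0]
  have hWabs : ∀ s, |W s| = |ψ s ^ (n - 1)| * |deriv u s| ^ (p - 1) := fun s => by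
    rw [hW]
    simp only
    rw [mul_assoc, abs_mul, abs_mul, abs_of_nonneg (rpow_nonneg (abs_nonneg _) _)]
    rcases eq_or_ne (deriv u s) 0 with h0 | h0
    · simp [h0, zero_rpow (show p - 1 ≠ 0 by linarith)]
    · rw [← rpow_add_one (abs_ne_zero.2 h0)]
      ring_nf
  have hWc0 : ContinuousWithinAt W (Set.Ici 0) 0 := by
    rw [ContinuousWithinAt, hW0, tendsto_zero_iff_abs_tendsto_zero]
    have h1 : ContinuousOn (fun s => |ψ s ^ (n - 1)| * |deriv u s| ^ (p - 1)) (Set.Ici 0) :=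
      (hψ.1.continuous.pow (n - 1)).abs.continuousOn.mul
        (hu.continuousOn_deriv.abs.rpow_const fun _ _ => Or.inr (by linarith))
    have h2 := h1 0 Set.self_mem_Ici
    rw [ContinuousWithinAt, hψ0, abs_zero, zero_mul] at h2
    exact h2.congr fun s => (hWabs s).symm
  have hanti : StrictAntiOn W (Set.Ici 0) := by
    refine strictAntiOn_of_hasDerivWithinAt_neg (convex_Ici 0) (fun s hs => ?_)
      (fun s hs => (hWd s (by simpa using hs)).hasDerivWithinAt) fun s hs => ?_
    · rcases (show (0 : ℝ) ≤ s from hs).eq_or_lt with rfl | hs'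
      · exact hWc0
      · exact (hWd s hs').continuousAt.continuousWithinAt
    · have hs' : 0 < s := by simpa using hs
      exact neg_neg_of_pos (mul_pos (pow_pos (hψ.2.2.2.2 s hs') _)
        (rpow_pos_of_pos (hu.pos_of_nonneg hs'.le) _))
  have h := hanti Set.self_mem_Ici hr.le hr
  rw [hW0] at h
  by_contra! hcon
  exact h.not_ge (mul_nonneg (mul_nonneg (pow_nonneg (hψ.2.2.2.2 r hr).le _)
    (rpow_nonneg (abs_nonneg _) _)) hcon)

theorem deriv_eq_neg_flux_rpow (hu : IsRadialSolution n p q ψ ⊤ α u) (hψ : IsCHModel ψ)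
    (hn : 2 ≤ n) (hp : 1 < p) {r : ℝ} (hr : 0 < r) :
    deriv u r = -(((-deriv u r) ^ (p - 1)) ^ (1 / (p - 1))) := by
  rw [← rpow_mul (neg_nonneg.2 (hu.deriv_neg hψ hn hp hr).le),
    mul_one_div_cancel (by linarith), rpow_one, neg_neg]

theorem hasDerivAt_flux (hu : IsRadialSolution n p q ψ ⊤ α u) (hψ : IsCHModel ψ) (hn : 2 ≤ n)
    (hp : 1 < p) {r : ℝ} (hr : 0 < r) :
    HasDerivAt (fun s => (-deriv u s) ^ (p - 1))
      (u r ^ q - ((n : ℝ) - 1) * (deriv ψ r / ψ r) * (-deriv u r) ^ (p - 1)) r := by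
  have heq : ∀ s, 0 < s → (-deriv u s) ^ (p - 1) =
      -(ψ s ^ (n - 1) * |deriv u s| ^ (p - 2) * deriv u s) / ψ s ^ (n - 1) := fun s hs => by
    have h1 := hu.deriv_neg hψ hn hp hs
    have h2 := pow_pos (hψ.2.2.2.2 s hs) (n - 1)
    rw [abs_of_neg h1, show p - 1 = p - 2 + 1 by ring, rpow_add_one (by linarith)]
    field_simp
  have hψr := pow_pos (hψ.2.2.2.2 r hr) (n - 1)
  have hd := ((hu.eqn r hr ENNReal.ofReal_lt_top).neg.div (hψ.hasDerivAt_pow hn hr) hψr.ne')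
  have hev : (fun s => (-deriv u s) ^ (p - 1)) =ᶠ[𝓝 r] fun s =>
      -(ψ s ^ (n - 1) * |deriv u s| ^ (p - 2) * deriv u s) / ψ s ^ (n - 1) :=
    (eventually_gt_nhds hr).mono heq
  refine (hd.congr_of_eventuallyEq hev).congr_deriv ?_
  rw [heq r hr]
  simp only [Pi.neg_apply]
  field_simp

/-- The Pohozaev inequality `P_u ≤ 0`, written in terms of the flux `v = (-u') ^ (p - 1)`. -/
theorem pohozaev_nonpos (hu : IsRadialSolution n p q ψ ⊤ α u) (hψ : IsCHModel ψ) (hn : 2 ≤ n)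
    (hp : 1 < p) (hpn : p < n) (hq : (n : ℝ) * p / (n - p) - 1 ≤ q) {r : ℝ} (hr : 0 < r) :
    (∫ s in (0:ℝ)..r, ψ s ^ (n - 1)) *
        ((p - 1) / p * ((-deriv u r) ^ (p - 1)) ^ (1 / (p - 1) + 1) + u r ^ (q + 1) / (q + 1)) -
      ψ r ^ (n - 1) * (-deriv u r) ^ (p - 1) * u r / (q + 1) ≤ 0 := by
  have hnp : 0 < (n : ℝ) - p := by linarith
  have hn0 : (0 : ℝ) < n := by linarith
  have hq1 : (n : ℝ) * p / (n - p) ≤ q + 1 := by linarith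
  have hq0 : 0 < q + 1 := lt_of_lt_of_le (by positivity) hq1
  have hp0 : 0 < p := by linarith
  have hp1 : 0 < p - 1 := by linarith
  have hconst : (p - 1) / p + 1 / (q + 1) ≤ ((n : ℝ) - 1) / n := by
    have h1 : 1 / (q + 1) ≤ 1 / ((n : ℝ) * p / (n - p)) :=
      one_div_le_one_div_of_le (by positivity) hq1
    have h2 : (p - 1) / p + 1 / ((n : ℝ) * p / (n - p)) = ((n : ℝ) - 1) / n := by
      field_simp
      ring
    linarith
  set v : ℝ → ℝ := fun s => (-deriv u s) ^ (p - 1) with hv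
  set e := 1 / (p - 1) with he
  have he0 : 0 < e := one_div_pos.2 hp1
  set V : ℝ → ℝ := fun r => ∫ s in (0:ℝ)..r, ψ s ^ (n - 1) with hV
  have hVd : ∀ s, HasDerivAt V (ψ s ^ (n - 1)) s := hψ.hasDerivAt_volume (n - 1)
  have hv0 : ∀ s, 0 < s → 0 < v s := fun s hs =>
    rpow_pos_of_pos (by linarith [hu.deriv_neg hψ hn hp hs]) _
  have hvd : ∀ s, 0 < s → HasDerivAt v
      (u s ^ q - ((n : ℝ) - 1) * (deriv ψ s / ψ s) * v s) s := fun s hs =>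
    hu.hasDerivAt_flux hψ hn hp hs
  have hud : ∀ s, 0 < s → HasDerivAt u (-(v s ^ e)) s := fun s hs =>
    (hu.hasDerivAt hs.le).congr_deriv (hu.deriv_eq_neg_flux_rpow hψ hn hp hs)
  have hvc : ContinuousOn v (Set.Ici 0) :=
    hu.continuousOn_deriv.neg.rpow_const fun _ _ => Or.inr hp1.le
  have huc : ContinuousOn u (Set.Ici 0) := fun s hs =>
    (hu.hasDerivAt hs).continuousAt.continuousWithinAt
  set P : ℝ → ℝ := fun r => V r * ((p - 1) / p * v r ^ (e + 1) + u r ^ (q + 1) / (q + 1)) -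
    ψ r ^ (n - 1) * v r * u r / (q + 1) with hP
  have hPc : ContinuousOn P (Set.Ici 0) := by
    refine ContinuousOn.sub (ContinuousOn.mul (fun s _ => (hVd s).continuousAt.continuousWithinAt)
      (ContinuousOn.add ?_ ?_)) ?_
    · exact continuousOn_const.mul (hvc.rpow_const fun _ _ => Or.inr (by linarith))
    · exact (huc.rpow_const fun _ _ => Or.inr hq0.le).div_const _
    · exact (((hψ.1.continuous.pow (n - 1)).continuousOn.mul hvc).mul huc).div_const _
  have hPd : ∀ s, 0 < s → HasDerivAt P ((((p - 1) / p + 1 / (q + 1)) * ψ s ^ (n - 1) -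
      ((n : ℝ) - 1) * (deriv ψ s / ψ s) * V s) * (v s * v s ^ e)) s := fun s hs => by
    have hus := hu.pos_of_nonneg hs.le
    have h1 := (hvd s hs).rpow_const (p := e + 1) (Or.inl (hv0 s hs).ne')
    have h2 := (hud s hs).rpow_const (p := q + 1) (Or.inl hus.ne')
    have h3 := ((hVd s).mul ((h1.const_mul ((p - 1) / p)).add (h2.div_const (q + 1)))).sub
      ((((hψ.hasDerivAt_pow hn hs).mul (hvd s hs)).mul (hud s hs)).div_const (q + 1))
    refine h3.congr_deriv ?_
    simp only [Pi.mul_apply, Pi.add_apply, add_sub_cancel_right]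
    rw [rpow_add_one (hv0 s hs).ne', rpow_add_one hus.ne',
      show e + 1 = p / (p - 1) by rw [he]; field_simp; ring]
    field_simp
    ring
  have hanti : AntitoneOn P (Set.Ici 0) := by
    refine antitoneOn_of_hasDerivWithinAt_nonpos (convex_Ici 0) hPc
      (fun s hs => (hPd s (by simpa using hs)).hasDerivWithinAt) fun s hs => ?_
    have hs' : 0 < s := by simpa using hs
    have hψs := hψ.2.2.2.2 s hs'
    refine mul_nonpos_of_nonpos_of_nonneg ?_
      (mul_nonneg (hv0 s hs').le (rpow_nonneg (hv0 s hs').le _))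
    have h1 := hψ.pow_le_deriv_mul_volume (n := n) (by omega) hs'.le
    have h2 : ((n : ℝ) - 1) / n * ψ s ^ (n - 1) ≤ ((n : ℝ) - 1) * (deriv ψ s / ψ s) * V s := by
      have h3 : ((n : ℝ) - 1) / n * ψ s ^ (n - 1) = ((n : ℝ) - 1) / ψ s * (ψ s ^ n / n) := by
        rw [← pow_sub_one_mul (show n ≠ 0 by omega) (ψ s)]
        field_simp
      have h4 : ((n : ℝ) - 1) * (deriv ψ s / ψ s) * V s =
          ((n : ℝ) - 1) / ψ s * (deriv ψ s * V s) := by ring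
      rw [h3, h4]
      exact mul_le_mul_of_nonneg_left h1 (div_nonneg (by linarith) hψs.le)
    linarith [mul_le_mul_of_nonneg_right hconst (pow_nonneg hψs.le (n - 1))]
  have hP0 : P 0 = 0 := by
    simp [hP, hV, hψ.2.1, show n - 1 ≠ 0 by omega]
  exact (hanti Set.self_mem_Ici hr.le hr.le).trans_eq hP0

theorem Theta_mul_slope_le (hu : IsRadialSolution n p q ψ ⊤ α u) (hψ : IsCHModel ψ) (hn : 2 ≤ n)
    (hp : 1 < p) (hpn : p < n) (hq : (n : ℝ) * p / (n - p) - 1 ≤ q) {r : ℝ} (hr : 0 < r) :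
    Theta n ψ r * ((-deriv u r) ^ (p - 1)) ^ (1 / (p - 1)) / u r ≤
      p / ((p - 1) * (q + 1)) := by
  have hnp : 0 < (n : ℝ) - p := by linarith
  have hn0 : (0 : ℝ) < n := by linarith
  have hq0 : 0 < q + 1 :=
    lt_of_lt_of_le (show 0 < (n : ℝ) * p / (n - p) by positivity) (by linarith)
  have hp0 : 0 < p := by linarith
  have hp1 : 0 < p - 1 := by linarith
  have hv : 0 < (-deriv u r) ^ (p - 1) :=
    rpow_pos_of_pos (by linarith [hu.deriv_neg hψ hn hp hr]) _
  have hP := hu.pohozaev_nonpos hψ hn hp hpn hq hr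
  have hur := hu.pos_of_nonneg hr.le
  have hψr := pow_pos (hψ.2.2.2.2 r hr) (n - 1)
  have hV := hψ.volume_nonneg (n - 1) hr.le
  rw [rpow_add_one hv.ne'] at hP
  unfold Theta
  set v := (-deriv u r) ^ (p - 1)
  set V := ∫ s in (0:ℝ)..r, ψ s ^ (n - 1)
  set w := v ^ (1 / (p - 1))
  have h1 : 0 ≤ V * (u r ^ (q + 1) / (q + 1)) := by positivity
  have h2 : V * w * ((p - 1) / p) * v ≤ ψ r ^ (n - 1) * u r / (q + 1) * v := by
    calc _ = V * ((p - 1) / p * (w * v)) := by ring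
      _ ≤ ψ r ^ (n - 1) * v * u r / (q + 1) := by linarith
      _ = _ := by ring
  have h3 := le_of_mul_le_mul_right h2 hv
  calc V / ψ r ^ (n - 1) * w / u r
      = V * w * ((p - 1) / p) * (p / ((p - 1) * ψ r ^ (n - 1) * u r)) := by field_simp
    _ ≤ ψ r ^ (n - 1) * u r / (q + 1) * (p / ((p - 1) * ψ r ^ (n - 1) * u r)) :=
        mul_le_mul_of_nonneg_right h3 (by positivity)
    _ = p / ((p - 1) * (q + 1)) := by field_simp

end IsRadialSolution

/-- `(-u') u^{-q/(p-1)} (ψ'/ψ)^{1/(p-1)} → (1/(n-1))^{1/(p-1)}`. -/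
theorem statement_16 (n : ℕ) (hn : 2 ≤ n) (p q : ℝ) (hp1 : 1 < p) (hpn : p < n)
    (hq : (n : ℝ) * p / ((n : ℝ) - p) - 1 ≤ q)
    (ψ : ℝ → ℝ) (hψ : IsCHModel ψ)
    (hpc : Tendsto (fun r : ℝ => ∫ s in (0:ℝ)..r, Theta n ψ s ^ (1 / (p - 1)))
      atTop atTop)
    (hcond : CondA ψ ∨ CondB ψ)
    (α : ℝ) (hα : 0 < α)
    (u : ℝ → ℝ) (hu : IsRadialSolution n p q ψ ⊤ α u) :
    Tendsto (fun r : ℝ => -deriv u r * u r ^ (-(q / (p - 1))) *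
        (deriv ψ r / ψ r) ^ (1 / (p - 1))) atTop
      (nhds ((1 / ((n : ℝ) - 1)) ^ (1 / (p - 1)))) := by
  obtain ⟨g, g', G, hg, hg', hG, hGtop, hh, hg2⟩ := hψ.exists_slowly_varying hcond
  have hnp : 0 < (n : ℝ) - p := by linarith
  have hn0 : (0 : ℝ) < n := by linarith
  have hm : (0 : ℝ) < n - 1 := by linarith
  have hp0 : 0 < p := by linarith
  have hp1' : 0 < p - 1 := by linarith
  have hpq : p < q + 1 := by
    have : p < (n : ℝ) * p / (n - p) := by
      rw [lt_div_iff₀ hnp]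
      nlinarith
    linarith
  have he : 0 < 1 / (p - 1) := one_div_pos.2 hp1'
  have hv : ∀ r, 0 < r → 0 < (-deriv u r) ^ (p - 1) := fun r hr =>
    rpow_pos_of_pos (by linarith [hu.deriv_neg hψ hn hp1 hr]) _
  have hΘ := hψ.tendsto_Theta_mul hn hg hg' hG hGtop hh hg2
  obtain ⟨X, hX1, hX2⟩ : ∃ X, p / ((p - 1) * (q + 1)) * ((n : ℝ) - 1) < X ∧
      X < 1 / (p - 1) * ((n : ℝ) - 1) := by
    refine exists_between (mul_lt_mul_of_pos_right ?_ hm)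
    rw [div_lt_div_iff₀ (mul_pos hp1' (by linarith)) hp1']
    nlinarith
  have hslope : ∀ᶠ r in atTop,
      ((-deriv u r) ^ (p - 1)) ^ (1 / (p - 1)) / (u r * g r) ≤ X := by
    have hlim : Tendsto (fun r => p / ((p - 1) * (q + 1)) / (Theta n ψ r * g r)) atTop
        (𝓝 (p / ((p - 1) * (q + 1)) * ((n : ℝ) - 1))) := by
      simpa only [one_div, inv_inv, ← div_eq_mul_inv] using
        (hΘ.inv₀ (one_div_pos.2 hm).ne').const_mul (p / ((p - 1) * (q + 1)))
    filter_upwards [hlim.eventually_lt_const hX1, hΘ.eventually_const_lt (one_div_pos.2 hm),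
      eventually_gt_atTop 0] with r h1 h2 h3
    refine le_trans ?_ h1.le
    have hur := hu.pos_of_nonneg h3.le
    have hgr := hg r h3
    have h4 := hu.Theta_mul_slope_le hψ hn hp1 hpn hq h3
    rw [le_div_iff₀ h2]
    refine le_trans (le_of_eq ?_) h4
    field_simp
  have hflux := tendsto_normalized_flux (q := q) he hm
    (by rw [mul_one_div, lt_div_iff₀ hp1']; linarith) (fun r hr => hu.pos_of_nonneg hr.le) hv
    (fun r hr => (hu.hasDerivAt hr.le).congr_deriv (hu.deriv_eq_neg_flux_rpow hψ hn hp1 hr))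
    (fun r hr => hu.hasDerivAt_flux hψ hn hp1 hr) hg hg' hG hGtop hh hg2 hX2 hslope
  have hlim := (hflux.mul hh).rpow_const (p := 1 / (p - 1)) (Or.inr he.le)
  rw [mul_one] at hlim
  refine hlim.congr' ?_
  filter_upwards [eventually_gt_atTop 0] with r hr
  have hur := hu.pos_of_nonneg hr.le
  have hgr := hg r hr
  have hhr : 0 < deriv ψ r / ψ r :=
    div_pos (one_pos.trans_le (hψ.one_le_deriv hr.le)) (hψ.2.2.2.2 r hr)
  have h1 : (-deriv u r) ^ (p - 1) * g r * u r ^ (-q) * (deriv ψ r / ψ r / g r) =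
      (-deriv u r) ^ (p - 1) * u r ^ (-q) * (deriv ψ r / ψ r) := by
    field_simp
  have h2 : -deriv u r = ((-deriv u r) ^ (p - 1)) ^ (1 / (p - 1)) :=
    neg_eq_iff_eq_neg.2 (hu.deriv_eq_neg_flux_rpow hψ hn hp1 hr)
  rw [h1, mul_rpow (mul_nonneg (hv r hr).le (rpow_nonneg hur.le _)) hhr.le,
    mul_rpow (hv r hr).le (rpow_nonneg hur.le _), ← h2, ← rpow_mul hur.le, mul_one_div,
    neg_div]
end
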